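/- Let φ ∈ L^∞ₛ(∂𝔹). Then ‖H_φ‖ = inf{‖φ - f‖_{L^∞(∂𝔹)} : f ∈ H^∞(∂𝔹)}, i.e. the norm of the Hankel operator with symbol φ equals the L^∞ distance of φ from the bounded slice regular functions. -/

import Mathlib

noncomputable section

open MeasureTheory Quaternion

instance : MeasurableSpace (Quaternion ℝ) := borel _
instance : BorelSpace (Quaternion ℝ) := ⟨rfl⟩

/-- The sphere `𝕊` of imaginary units of `ℍ`. -/
def IU : Type := {I : Quaternion ℝ // I ^ 2 = -1}

instance : MeasurableSpace IU := Subtype.instMeasurableSpace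

/-- The point `e^{tI} = cos t + (sin t) I`. -/
def eI (I : Quaternion ℝ) (t : ℝ) : Quaternion ℝ :=
  ((Real.cos t : ℝ) : Quaternion ℝ) + Real.sin t • I

/-- The normalized measure `dΣ(e^{tI}) = dσ(I) dt` on `∂𝔹`, obtained by pushing forward
`σ ⊗ (dt on (0, 2π])` under `(I, t) ↦ e^{tI}` and normalizing by `2π`. -/
def sphereMeasure (σ : Measure IU) : Measure (Quaternion ℝ) :=
  (ENNReal.ofReal (2 * Real.pi))⁻¹ •
    Measure.map (fun p : IU × ℝ => eI p.1.1 p.2)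
      (σ.prod (volume.restrict (Set.Ioc 0 (2 * Real.pi))))

/-- A slice function on `∂𝔹`: it satisfies the representation formula. -/
def IsSlice (f : Quaternion ℝ → Quaternion ℝ) : Prop :=
  ∀ x y : ℝ, ∀ I J : Quaternion ℝ, I ^ 2 = -1 → J ^ 2 = -1 → x ^ 2 + y ^ 2 = 1 →
    f ((x : Quaternion ℝ) + y • J) =
      ((1 - J * I) / 2) * f ((x : Quaternion ℝ) + y • I) +
      ((1 + J * I) / 2) * f ((x : Quaternion ℝ) - y • I)

/-- The `n`-th Fourier coefficient of (the restriction to the slice of `I` of) a function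
on `∂𝔹`: `φ̂(n) = (1/2π) ∫₀^{2π} e^{-nIt} φ(e^{It}) dt`. -/
def fourierCoef (φ : Quaternion ℝ → Quaternion ℝ) (I : Quaternion ℝ) (n : ℤ) : Quaternion ℝ :=
  (2 * Real.pi)⁻¹ • ∫ t in (0:ℝ)..(2 * Real.pi), eI I (-(n * t)) * φ (eI I t)



open scoped MulOpposite

/-! ### The sequence space and the one-step extension -/

/-- The sequence space. -/
abbrev EE : Type := lp (fun _ : ℕ => Quaternion ℝ) 2

theorem EE_hasSum (a : EE) : HasSum (fun k => ‖a k‖ ^ 2) (‖a‖ ^ 2) := by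
  have h := lp.hasSum_norm (p := 2) (by simp) a
  simpa using h

theorem EE_norm_sq (a : EE) : ‖a‖ ^ 2 = ∑' k, ‖a k‖ ^ 2 := (EE_hasSum a).tsum_eq.symm

theorem EE_memlp {f : ℕ → Quaternion ℝ} (h : Summable fun k => ‖f k‖ ^ 2) : Memℓp f 2 := by
  rw [memℓp_gen_iff (by simp)]
  simpa using h

/-- build a sequence -/
def EE_mk (f : ℕ → Quaternion ℝ) (h : Summable fun k => ‖f k‖ ^ 2) : EE := ⟨f, EE_memlp h⟩

@[simp] theorem EE_mk_apply (f : ℕ → Quaternion ℝ) (h) (k : ℕ) : EE_mk f h k = f k := rfl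

theorem EE_ext {a b : EE} (h : ∀ k, a k = b k) : a = b := lp.ext (funext h)

/-- The bounded Hankel predicate. -/
def Hk (C : ℝ) (γ : ℕ → Quaternion ℝ) : Prop :=
  ∀ a : EE, ∃ w : EE, (∀ m : ℕ, HasSum (fun k : ℕ => γ (m + k) * a k) (w m)) ∧ ‖w‖ ≤ C * ‖a‖

/-- cons -/
def consQ (x : Quaternion ℝ) (γ : ℕ → Quaternion ℝ) : ℕ → Quaternion ℝ
  | 0 => x
  | (k + 1) => γ k

theorem EE_tail_summable (a : EE) : Summable fun k => ‖a (k + 1)‖ ^ 2 :=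
  (summable_nat_add_iff (f := fun k => ‖a k‖ ^ 2) 1).2 (EE_hasSum a).summable

/-- left shift as a real linear map -/
def EE_tail : EE →ₗ[ℝ] EE where
  toFun a := EE_mk (fun k => a (k + 1)) (EE_tail_summable a)
  map_add' a b := EE_ext fun k => by simp
  map_smul' a b := EE_ext fun k => by simp

@[simp] theorem EE_tail_apply (a : EE) (k : ℕ) : EE_tail a k = a (k + 1) := rfl

theorem EE_cons_summable (x : Quaternion ℝ) (a : EE) : Summable fun k => ‖consQ x (fun k => a k) k‖ ^ 2 :=
  (summable_nat_add_iff (f := fun k => ‖consQ x (fun k => a k) k‖ ^ 2) 1).1 (EE_hasSum a).summable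

/-- cons in the sequence space -/
def EE_cons (x : Quaternion ℝ) (a : EE) : EE := EE_mk _ (EE_cons_summable x a)

@[simp] theorem EE_cons_zero (x : Quaternion ℝ) (a : EE) : EE_cons x a 0 = x := rfl
@[simp] theorem EE_cons_succ (x : Quaternion ℝ) (a : EE) (k : ℕ) : EE_cons x a (k + 1) = a k := rfl

theorem EE_cons_norm (x : Quaternion ℝ) (a : EE) : ‖EE_cons x a‖ ^ 2 = ‖x‖ ^ 2 + ‖a‖ ^ 2 := by
  rw [EE_norm_sq, EE_norm_sq a, (EE_hasSum _).summable.tsum_eq_zero_add]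
  simp

theorem EE_eq_cons (a : EE) : a = EE_cons (a 0) (EE_tail a) := by
  apply EE_ext
  intro k
  cases k <;> simp

/-- right multiplication by a quaternion -/
def EE_rmul (a : EE) (q : Quaternion ℝ) : EE :=
  EE_mk (fun k => a k * q) (by
    simp only [norm_mul, mul_pow]
    exact (EE_hasSum a).summable.mul_right _)

@[simp] theorem EE_rmul_apply (a : EE) (q : Quaternion ℝ) (k : ℕ) : EE_rmul a q k = a k * q := rfl

theorem EE_rmul_norm_sq (a : EE) (q : Quaternion ℝ) : ‖EE_rmul a q‖ ^ 2 = ‖a‖ ^ 2 * ‖q‖ ^ 2 := by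
  rw [EE_norm_sq, EE_norm_sq a]
  simp only [EE_rmul_apply, norm_mul, mul_pow]
  exact tsum_mul_right

theorem semi_sublinear {V : Type*} [AddCommGroup V] [Module ℝ V] (B : LinearMap.BilinForm ℝ V)
    (hs : ∀ x, 0 ≤ B x x) (hB : ∀ x y, B x y = B y x) (x y : V) :
    Real.sqrt (B (x + y) (x + y)) ≤ Real.sqrt (B x x) + Real.sqrt (B y y) := by
  have h := LinearMap.BilinForm.apply_mul_apply_le_of_forall_zero_le B hs x y
  rw [hB y x] at h
  have h2 : B x y ≤ Real.sqrt (B x x) * Real.sqrt (B y y) := by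
    rw [← Real.sqrt_mul (hs x)]
    apply Real.le_sqrt_of_sq_le
    rw [pow_two]; exact h
  rw [Real.sqrt_le_left (by positivity), add_sq, Real.sq_sqrt (hs x), Real.sq_sqrt (hs y)]
  simp only [map_add, LinearMap.add_apply]
  rw [hB y x]
  nlinarith

/-- unit i -/
def qi : Quaternion ℝ := ⟨0, 1, 0, 0⟩
/-- unit j -/
def qj : Quaternion ℝ := ⟨0, 0, 1, 0⟩
/-- unit k -/
def qk : Quaternion ℝ := ⟨0, 0, 0, 1⟩

@[simp] theorem qi_re : qi.re = 0 := rfl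
@[simp] theorem qi_imI : qi.imI = 1 := rfl
@[simp] theorem qi_imJ : qi.imJ = 0 := rfl
@[simp] theorem qi_imK : qi.imK = 0 := rfl
@[simp] theorem qj_re : qj.re = 0 := rfl
@[simp] theorem qj_imI : qj.imI = 0 := rfl
@[simp] theorem qj_imJ : qj.imJ = 1 := rfl
@[simp] theorem qj_imK : qj.imK = 0 := rfl
@[simp] theorem qk_re : qk.re = 0 := rfl
@[simp] theorem qk_imI : qk.imI = 0 := rfl
@[simp] theorem qk_imJ : qk.imJ = 0 := rfl
@[simp] theorem qk_imK : qk.imK = 1 := rfl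

theorem quat_functional (g : Quaternion ℝ →ₗ[ℝ] ℝ) :
    ∃ x : Quaternion ℝ, ∀ ξ, g ξ = (x * ξ).re := by
  refine ⟨g 1 • 1 - g qi • qi - g qj • qj - g qk • qk, fun ξ => ?_⟩
  have : ξ = ξ.re • (1 : Quaternion ℝ) + ξ.imI • qi + ξ.imJ • qj + ξ.imK • qk := by
    ext <;> simp
  conv_lhs => rw [this]
  simp only [map_add, map_smul, smul_eq_mul]
  simp
  ring

theorem quat_normsq (q : Quaternion ℝ) :
    ‖q‖ ^ 2 = q.re ^ 2 + q.imI ^ 2 + q.imJ ^ 2 + q.imK ^ 2 := by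
  rw [pow_two, ← Quaternion.normSq_eq_norm_mul_self, Quaternion.normSq_def']

theorem quat_re_sq_le (q : Quaternion ℝ) : q.re ^ 2 ≤ ‖q‖ ^ 2 := by
  rw [quat_normsq]
  nlinarith [sq_nonneg q.imI, sq_nonneg q.imJ, sq_nonneg q.imK]

theorem hk_step {C : ℝ} (hC : 0 ≤ C) {γ : ℕ → Quaternion ℝ} (h : Hk C γ) :
    ∃ x, Hk C (consQ x γ) := by
  choose G hG hGn using h
  have uniq : ∀ (a w : EE), (∀ m : ℕ, HasSum (fun k : ℕ => γ (m + k) * a k) (w m)) → G a = w :=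
    fun a w hw => EE_ext fun m => (hG a m).unique (hw m)
  let Γ : EE →ₗ[ℝ] EE :=
    { toFun := G
      map_add' := fun a b => uniq _ _ fun m => by
        simpa [mul_add] using (hG a m).add (hG b m)
      map_smul' := fun r a => uniq _ _ fun m => by
        simpa using (hG a m).const_smul r }
  have hΓ : ∀ a, Γ a = G a := fun _ => rfl
  have hmul : ∀ a q, G (EE_rmul a q) = EE_rmul (G a) q := fun a q => uniq _ _ fun m => by
    simpa [mul_assoc] using (hG a m).mul_right q
  have htail : ∀ a : EE, a 0 = 0 → G a = EE_tail (G (EE_tail a)) := fun a ha => uniq _ _ fun m => by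
    have h1 := hG (EE_tail a) (m + 1)
    rw [← hasSum_nat_add_iff' 1]
    simp only [Finset.range_one, Finset.sum_singleton, ha, mul_zero, sub_zero]
    simp only [EE_tail_apply] at h1 ⊢
    have e : (fun k => γ (m + (k + 1)) * a (k + 1)) = fun k => γ (m + 1 + k) * a (k + 1) := by
      funext k
      rw [show m + (k + 1) = m + 1 + k by omega]
    rw [e]
    exact h1
  let B : LinearMap.BilinForm ℝ EE :=
    C ^ 2 • innerₗ EE - (innerₗ EE).compl₁₂ Γ Γ
  have hB : ∀ x y, B x y = C ^ 2 * inner ℝ x y - inner ℝ (G x) (G y) := fun x y => by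
    simp [B, hΓ]
  have hBx : ∀ x, B x x = C ^ 2 * ‖x‖ ^ 2 - ‖G x‖ ^ 2 := fun x => by
    rw [hB, real_inner_self_eq_norm_sq, real_inner_self_eq_norm_sq]
  have hpos : ∀ x, 0 ≤ B x x := fun x => by
    rw [hBx, ← mul_pow, sub_nonneg]
    exact pow_le_pow_left₀ (norm_nonneg _) (hGn x) 2
  have hsymm : ∀ x y, B x y = B y x := fun x y => by
    rw [hB, hB, real_inner_comm, real_inner_comm (G x)]
  let ev : EE →ₗ[ℝ] Quaternion ℝ :=
    { toFun := fun a => a 0, map_add' := fun a b => by simp, map_smul' := fun a b => by simp }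
  let reL : Quaternion ℝ →ₗ[ℝ] ℝ :=
    { toFun := fun a => a.re, map_add' := fun a b => by simp, map_smul' := fun a b => by simp }
  let F : EE →ₗ[ℝ] ℝ := reL ∘ₗ ev ∘ₗ Γ ∘ₗ EE_tail
  have hF : ∀ a, F a = (G (EE_tail a) 0).re := fun a => rfl
  let f : EE →ₗ.[ℝ] ℝ := ⟨LinearMap.ker ev, F.domRestrict _⟩
  obtain ⟨g, hg1, hg2⟩ := exists_extension_of_le_sublinear f (fun v => Real.sqrt (B v v))
    (by
      intro c hc x
      simp only [map_smul, LinearMap.smul_apply, smul_eq_mul]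
      rw [← mul_assoc, Real.sqrt_mul (by positivity), Real.sqrt_mul_self hc.le])
    (semi_sublinear B hpos hsymm)
    (by
      rintro ⟨v, hv⟩
      have hv0 : v 0 = 0 := hv
      change F v ≤ Real.sqrt (B v v)
      apply Real.le_sqrt_of_sq_le
      rw [hF, hBx]
      have h1 := EE_cons_norm (G (EE_tail v) 0) (EE_tail (G (EE_tail v)))
      rw [← EE_eq_cons, ← htail v hv0] at h1
      have h2 := EE_cons_norm (v 0) (EE_tail v)
      rw [← EE_eq_cons, hv0] at h2
      have h3 := pow_le_pow_left₀ (norm_nonneg _) (hGn (EE_tail v)) 2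
      have h4 : (G (EE_tail v) 0).re ^ 2 ≤ ‖G (EE_tail v) 0‖ ^ 2 :=
        quat_re_sq_le _
      rw [mul_pow] at h3
      simp at h2
      rw [h2]
      linarith)
  let s : Quaternion ℝ →ₗ[ℝ] EE :=
    { toFun := fun ξ => EE_cons ξ 0
      map_add' := fun a b => EE_ext fun k => by cases k <;> simp
      map_smul' := fun a b => EE_ext fun k => by cases k <;> simp }
  obtain ⟨x, hx⟩ := quat_functional (g ∘ₗ s)
  have hgv : ∀ v : EE, g v = (x * v 0 + G (EE_tail v) 0).re := by
    intro v
    have h1 : v - s (v 0) ∈ LinearMap.ker ev := by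
      change v 0 - v 0 = 0
      simp
    have h2 := hg1 ⟨_, h1⟩
    change g (v - s (v 0)) = F (v - s (v 0)) at h2
    have h3 : EE_tail (s (v 0)) = 0 := EE_ext fun k => by simp [s]
    rw [map_sub, hF, map_sub, h3, sub_zero] at h2
    have h4 := hx (v 0)
    simp only [LinearMap.comp_apply] at h4
    rw [Quaternion.re_add, ← h4, ← h2]
    ring
  have key : ∀ v : EE, ‖x * v 0 + G (EE_tail v) 0‖ ^ 2 ≤ B v v := by
    intro v
    set r := x * v 0 + G (EE_tail v) 0 with hr
    have h1 := hg2 (EE_rmul v (star r))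
    have ht : EE_tail (EE_rmul v (star r)) = EE_rmul (EE_tail v) (star r) := EE_ext fun k => by simp
    rw [hgv, ht, hmul, hBx, hmul] at h1
    simp only [EE_rmul_apply, ← mul_assoc, ← add_mul] at h1
    rw [← hr, EE_rmul_norm_sq, EE_rmul_norm_sq, Quaternion.self_mul_star, Quaternion.re_coe,
      Quaternion.normSq_eq_norm_mul_self, Quaternion.norm_star, ← mul_assoc, ← sub_mul, ← hBx,
      Real.sqrt_mul (hpos _), Real.sqrt_sq (norm_nonneg _)] at h1
    rcases eq_or_ne ‖r‖ 0 with h0 | h0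
    · rw [h0]; simpa using hpos v
    · have h2 : ‖r‖ ≤ Real.sqrt (B v v) := le_of_mul_le_mul_right h1 (by positivity)
      exact (Real.le_sqrt (norm_nonneg _) (hpos v)).1 h2
  refine ⟨x, fun v => ⟨EE_cons (x * v 0 + G (EE_tail v) 0) (G v), ?_, ?_⟩⟩
  · intro m
    cases m with
    | zero =>
      rw [← hasSum_nat_add_iff' 1]
      have := hG (EE_tail v) 0
      simpa [consQ] using this
    | succ m =>
      have := hG v m
      simp only [EE_cons_succ]
      convert this using 2 with k
      rw [show m + 1 + k = (m + k) + 1 by omega]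
      rfl
  · have h1 := key v
    rw [hBx] at h1
    have h2 := EE_cons_norm (x * v 0 + G (EE_tail v) 0) (G v)
    apply le_of_sq_le_sq _ (by positivity)
    rw [h2, mul_pow]; linarith


theorem hk_of_finite {d : ℝ} (hd : 0 ≤ d) {γ : ℕ → Quaternion ℝ}
    (h : ∀ (M K : ℕ) (a : ℕ → Quaternion ℝ),
      ∑ m ∈ Finset.range M, ‖∑ k ∈ Finset.range K, γ (m + k) * a k‖ ^ 2
        ≤ d ^ 2 * ∑ k ∈ Finset.range K, ‖a k‖ ^ 2) : Hk d γ := by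
  have hs : Summable fun k => ‖γ k‖ ^ 2 := by
    refine summable_of_sum_range_le (c := d ^ 2) (fun _ => by positivity) fun M => ?_
    simpa using h M 1 (fun _ => 1)
  intro a
  have hsum : ∀ m, Summable fun k => γ (m + k) * a k := by
    intro m
    have h1 : Summable fun k => ‖γ (m + k)‖ ^ 2 := by
      have := (summable_nat_add_iff (f := fun k => ‖γ k‖ ^ 2) m).2 hs
      refine this.congr fun k => by rw [add_comm]
    refine Summable.of_norm_bounded (h1.add (EE_hasSum a).summable) fun k => ?_
    rw [norm_mul]
    nlinarith [sq_nonneg (‖γ (m + k)‖ - ‖a k‖), sq_nonneg (‖γ (m + k)‖), sq_nonneg (‖a k‖)]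
  have hb : ∀ M, ∑ m ∈ Finset.range M, ‖∑' k, γ (m + k) * a k‖ ^ 2 ≤ d ^ 2 * ‖a‖ ^ 2 := by
    intro M
    have ht : Filter.Tendsto (fun K => ∑ m ∈ Finset.range M,
        ‖∑ k ∈ Finset.range K, γ (m + k) * a k‖ ^ 2) Filter.atTop
        (nhds (∑ m ∈ Finset.range M, ‖∑' k, γ (m + k) * a k‖ ^ 2)) :=
      tendsto_finsetSum _ fun m _ => ((hsum m).hasSum.tendsto_sum_nat.norm).pow 2
    refine le_of_tendsto ht (Filter.Eventually.of_forall fun K => (h M K a).trans ?_)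
    exact mul_le_mul_of_nonneg_left (sum_le_hasSum _ (fun _ _ => by positivity) (EE_hasSum a))
      (by positivity)
  have hw : Summable fun m => ‖∑' k, γ (m + k) * a k‖ ^ 2 :=
    summable_of_sum_range_le (fun _ => by positivity) hb
  refine ⟨EE_mk _ hw, fun m => (hsum m).hasSum, ?_⟩
  apply le_of_sq_le_sq _ (by positivity)
  rw [EE_norm_sq, mul_pow]
  exact hw.tsum_le_of_sum_range_le hb

theorem hk_finite {d : ℝ} (hd : 0 ≤ d) {γ : ℕ → Quaternion ℝ} (h : Hk d γ)
    (M K : ℕ) (a : ℕ → Quaternion ℝ) :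
      ∑ m ∈ Finset.range M, ‖∑ k ∈ Finset.range K, γ (m + k) * a k‖ ^ 2
        ≤ d ^ 2 * ∑ k ∈ Finset.range K, ‖a k‖ ^ 2 := by
  have h0 : ∀ k ∉ Finset.range K, (if k < K then a k else 0) = 0 := by
    intro k hk
    simp at hk
    simp [hk]
  have hs : HasSum (fun k => ‖if k < K then a k else 0‖ ^ 2) (∑ k ∈ Finset.range K, ‖a k‖ ^ 2) := by
    have := hasSum_sum_of_ne_finset_zero (L := SummationFilter.unconditional ℕ) (f := fun k => ‖if k < K then a k else 0‖ ^ 2)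
      (s := Finset.range K) (fun k hk => by rw [h0 k hk]; simp)
    convert this using 1
    refine Finset.sum_congr rfl fun k hk => ?_
    simp at hk
    simp [hk]
  obtain ⟨w, hw, hn⟩ := h (EE_mk _ hs.summable)
  have hw' : ∀ m, w m = ∑ k ∈ Finset.range K, γ (m + k) * a k := by
    intro m
    have := hasSum_sum_of_ne_finset_zero (L := SummationFilter.unconditional ℕ)
      (f := fun k => γ (m + k) * (if k < K then a k else 0))
      (s := Finset.range K) (fun k hk => by rw [h0 k hk]; simp)
    rw [(hw m).unique this]
    refine Finset.sum_congr rfl fun k hk => ?_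
    simp at hk
    simp [hk]
  have h2 := pow_le_pow_left₀ (norm_nonneg _) hn 2
  rw [mul_pow, EE_norm_sq (EE_mk _ _)] at h2
  simp only [EE_mk_apply] at h2
  rw [hs.tsum_eq] at h2
  refine le_trans ?_ h2
  simp only [← hw']
  exact sum_le_hasSum _ (fun _ _ => by positivity) (EE_hasSum w)

theorem hk_extend {C : ℝ} (hC : 0 ≤ C) {γ : ℕ → Quaternion ℝ} (h : Hk C γ) :
    ∃ d : ℤ → Quaternion ℝ, (∀ j : ℕ, d (-((j : ℤ) + 1)) = γ j) ∧
      ∀ N : ℕ, Hk C (fun k : ℕ => d ((N : ℤ) - 1 - k)) := by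
  let S := {g : ℕ → Quaternion ℝ // Hk C g}
  let step : S → S := fun g => ⟨consQ (hk_step hC g.2).choose g.1, (hk_step hC g.2).choose_spec⟩
  let H : ℕ → S := fun n => Nat.rec ⟨γ, h⟩ (fun _ g => step g) n
  have hsucc : ∀ n k, (H (n + 1)).1 (k + 1) = (H n).1 k := fun n k => rfl
  have hadd : ∀ j n k, (H (n + j)).1 (k + j) = (H n).1 k := by
    intro j
    induction j with
    | zero => intro n k; rfl
    | succ j ih => intro n k; rw [← ih n k]; exact hsucc _ _
  let d : ℤ → Quaternion ℝ := fun m => (H (m + 1).toNat).1 (((m + 1).toNat : ℤ) - 1 - m).toNat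
  have hd : ∀ n k : ℕ, d ((n : ℤ) - 1 - k) = (H n).1 k := by
    intro n k
    change (H ((n : ℤ) - 1 - k + 1).toNat).1 _ = _
    rcases le_total k n with hk | hk
    · obtain ⟨m, rfl⟩ := Nat.exists_eq_add_of_le hk
      have e1 : (((k + m : ℕ) : ℤ) - 1 - k + 1).toNat = m := by omega
      rw [e1]
      have e2 : ((m : ℤ) - 1 - (((k + m : ℕ) : ℤ) - 1 - k)).toNat = 0 := by omega
      rw [e2]
      have := hadd k m 0
      rw [← this]
      rw [show m + k = k + m by omega, zero_add]
    · obtain ⟨m, rfl⟩ := Nat.exists_eq_add_of_le hk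
      have e1 : ((n : ℤ) - 1 - ((n + m : ℕ) : ℤ) + 1).toNat = 0 := by omega
      rw [e1]
      have e2 : (((0 : ℕ) : ℤ) - 1 - ((n : ℤ) - 1 - ((n + m : ℕ) : ℤ))).toNat = m := by omega
      rw [e2]
      have := hadd n 0 m
      rw [← this]
      rw [show m + n = n + m by omega, zero_add]
  refine ⟨d, fun j => ?_, fun N => ?_⟩
  · have := hd 0 j
    rw [show -((j : ℤ) + 1) = ((0 : ℕ) : ℤ) - 1 - j by push_cast; ring, this]
    rfl
  · have : (fun k : ℕ => d ((N : ℤ) - 1 - k)) = (H N).1 := funext fun k => hd N k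
    rw [this]; exact (H N).2

theorem fejer_aux {C : ℝ} (hC : 0 ≤ C) {γ : ℕ → Quaternion ℝ} (h : Hk C γ) (N : ℕ)
    (p q : ℕ → Quaternion ℝ) (hp : ∀ k, ‖p k‖ = 1) (hq : ∀ k, ‖q k‖ = 1) :
    ‖∑ k ∈ Finset.range N, ∑ m ∈ Finset.range N, q k * (p m * γ (m + k))‖ ≤ C * N := by
  set η : ℕ → Quaternion ℝ := fun k => ∑ m ∈ Finset.range N, p m * γ (m + k) with hη
  set T := ∑ k ∈ Finset.range N, ‖η k‖ ^ 2 with hT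
  set W : ℕ → Quaternion ℝ := fun m => ∑ k ∈ Finset.range N, γ (m + k) * star (η k) with hW
  have hT0 : 0 ≤ T := by positivity
  have h1 : ∑ m ∈ Finset.range N, ‖W m‖ ^ 2 ≤ C ^ 2 * T := by
    have := hk_finite hC h N N (fun k => star (η k))
    simpa only [Quaternion.norm_star] using this
  have h2 : (T : Quaternion ℝ) = ∑ m ∈ Finset.range N, p m * W m := by
    have : ∀ k, ((‖η k‖ ^ 2 : ℝ) : Quaternion ℝ) = η k * star (η k) := fun k => by
      rw [Quaternion.self_mul_star, Quaternion.normSq_eq_norm_mul_self, pow_two]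
    have e : (T : Quaternion ℝ) = ∑ k ∈ Finset.range N, η k * star (η k) := by
      change algebraMap ℝ (Quaternion ℝ) T = _
      rw [hT, map_sum]
      exact Finset.sum_congr rfl fun k _ => this k
    rw [e]
    simp only [hW, Finset.mul_sum]
    rw [Finset.sum_comm]
    refine Finset.sum_congr rfl fun k _ => ?_
    conv_lhs => rw [hη]
    simp only [Finset.sum_mul, mul_assoc]
    rfl
  have h3 : T ≤ ∑ m ∈ Finset.range N, ‖W m‖ := by
    have : T = ‖(T : Quaternion ℝ)‖ := by
      rw [Quaternion.norm_coe, Real.norm_of_nonneg hT0]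
    rw [this, h2]
    refine (norm_sum_le _ _).trans (le_of_eq ?_)
    simp [norm_mul, hp]
  have h4 := sq_sum_le_card_mul_sum_sq (s := Finset.range N) (f := fun m => ‖W m‖)
  rw [Finset.card_range] at h4
  have h5 : T ^ 2 ≤ N * (C ^ 2 * T) :=
    ((pow_le_pow_left₀ hT0 h3 2).trans h4).trans (by gcongr)
  have h6 : T ≤ N * C ^ 2 := by
    rcases eq_or_lt_of_le hT0 with h0 | h0
    · rw [← h0]; positivity
    · nlinarith
  have h7 := sq_sum_le_card_mul_sum_sq (s := Finset.range N) (f := fun m => ‖η m‖)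
  rw [Finset.card_range, ← hT] at h7
  have h8 : ∑ k ∈ Finset.range N, ‖η k‖ ≤ C * N := by
    apply le_of_sq_le_sq _ (by positivity)
    refine h7.trans ?_
    have : (N : ℝ) * T ≤ N * (N * C ^ 2) := by gcongr
    nlinarith
  refine le_trans ?_ h8
  refine (norm_sum_le _ _).trans (Finset.sum_le_sum fun k _ => ?_)
  rw [← Finset.mul_sum, norm_mul, hq, one_mul]


/-! ### Elementary facts on quaternions and trigonometric integrals -/

theorem iu_coords {I : Quaternion ℝ} (h : I ^ 2 = -1) :
    I.re = 0 ∧ I.imI ^ 2 + I.imJ ^ 2 + I.imK ^ 2 = 1 := by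
  have h0 := congrArg (fun q : Quaternion ℝ => q.re) h
  have h1 := congrArg (fun q : Quaternion ℝ => q.imI) h
  have h2 := congrArg (fun q : Quaternion ℝ => q.imJ) h
  have h3 := congrArg (fun q : Quaternion ℝ => q.imK) h
  simp [pow_two] at h0 h1 h2 h3
  have hr : I.re = 0 := by
    by_contra hne
    have e1 : I.imI = 0 := by
      have : I.re * I.imI = 0 := by linarith
      exact (mul_eq_zero.1 this).resolve_left hne
    have e2 : I.imJ = 0 := by
      have : I.re * I.imJ = 0 := by linarith
      exact (mul_eq_zero.1 this).resolve_left hne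
    have e3 : I.imK = 0 := by
      have : I.re * I.imK = 0 := by linarith
      exact (mul_eq_zero.1 this).resolve_left hne
    rw [e1, e2, e3] at h0
    nlinarith [sq_nonneg I.re]
  refine ⟨hr, ?_⟩
  rw [hr] at h0
  linarith

theorem iu_of_coords {I : Quaternion ℝ} (h0 : I.re = 0)
    (h1 : I.imI ^ 2 + I.imJ ^ 2 + I.imK ^ 2 = 1) : I ^ 2 = -1 := by
  rw [pow_two]
  ext <;> simp [h0] <;> nlinarith

theorem iu_neg {I : Quaternion ℝ} (h : I ^ 2 = -1) : (-I) ^ 2 = -1 := by simpa using h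

theorem iu_mul {I : Quaternion ℝ} (h : I ^ 2 = -1) : I * I = -1 := by rw [← pow_two, h]

theorem qi_sq : qi ^ 2 = -1 := iu_of_coords (by simp) (by simp)

theorem eI_norm {I : Quaternion ℝ} (h : I ^ 2 = -1) (t : ℝ) : ‖eI I t‖ = 1 := by
  obtain ⟨h0, h1⟩ := iu_coords h
  have : ‖eI I t‖ ^ 2 = 1 := by
    rw [quat_normsq]
    simp only [eI, Quaternion.re_add, Quaternion.imI_add, Quaternion.imJ_add, Quaternion.imK_add,
      Quaternion.re_coe, Quaternion.imI_coe, Quaternion.imJ_coe, Quaternion.imK_coe,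
      Quaternion.re_smul, Quaternion.imI_smul, Quaternion.imJ_smul, Quaternion.imK_smul, h0,
      smul_eq_mul]
    have := Real.sin_sq_add_cos_sq t
    linear_combination (Real.sin t) ^ 2 * h1 + this
  nlinarith [norm_nonneg (eI I t)]

theorem eI_add {I : Quaternion ℝ} (h : I ^ 2 = -1) (s t : ℝ) :
    eI I (s + t) = eI I s * eI I t := by
  have hm := iu_mul h
  simp only [eI, Real.cos_add, Real.sin_add, mul_add, add_mul, smul_mul_assoc, mul_smul_comm, hm,
    Quaternion.coe_mul_eq_smul, Quaternion.mul_coe_eq_smul, smul_smul]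
  ext <;> simp <;> ring

theorem eI_periodic (I : Quaternion ℝ) (t : ℝ) : eI I (2 * Real.pi - t) = eI I (-t) := by
  simp [eI, Real.cos_two_pi_sub, Real.sin_two_pi_sub]

theorem pointwise_bound {α β : Quaternion ℝ} {d : ℝ}
    (h : ∀ J : Quaternion ℝ, J ^ 2 = -1 → ‖α + J * β‖ ≤ d) (x y : Quaternion ℝ) :
    ‖α * x - β * y‖ ^ 2 + ‖α * y + β * x‖ ^ 2 ≤ d ^ 2 * (‖x‖ ^ 2 + ‖y‖ ^ 2) := by
  set v : Quaternion ℝ := (α * star β).im with hv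
  set u : Quaternion ℝ := (star α * β).im with hu
  set z : Quaternion ℝ := (x * star y).im with hz
  have huv : ‖u‖ = ‖v‖ := by
    have : ‖u‖ ^ 2 = ‖v‖ ^ 2 := by
      rw [quat_normsq, quat_normsq, hu, hv]
      simp
      ring
    exact (pow_left_inj₀ (norm_nonneg _) (norm_nonneg _) two_ne_zero).1 this
  have h1 : ‖α‖ ^ 2 + ‖β‖ ^ 2 + 2 * ‖v‖ ≤ d ^ 2 := by
    by_cases hv0 : v = 0
    · have e : ‖α + qi * β‖ ^ 2 = ‖α‖ ^ 2 + ‖β‖ ^ 2 + 2 * v.imI := by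
        rw [quat_normsq, quat_normsq, quat_normsq, hv]
        simp
        ring
      rw [hv0, norm_zero]
      have := pow_le_pow_left₀ (norm_nonneg _) (h qi qi_sq) 2
      rw [e, hv0] at this
      simpa using this
    · have hvn : ‖v‖ ≠ 0 := by simpa using hv0
      have hvs := quat_normsq v
      have hre : v.re = 0 := by rw [hv]; simp
      have hJ : (‖v‖⁻¹ • v) ^ 2 = -1 := by
        apply iu_of_coords
        · simp [hre]
        · simp only [Quaternion.imI_smul, Quaternion.imJ_smul, Quaternion.imK_smul, smul_eq_mul,
            mul_pow]
          rw [← mul_add, ← mul_add, inv_pow]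
          rw [hre] at hvs
          rw [hvs]
          apply inv_mul_cancel₀ _ |> fun e => (by simpa using e)
          rw [← (by linarith : ‖v‖ ^ 2 = v.imI ^ 2 + v.imJ ^ 2 + v.imK ^ 2)]
          positivity
      have e : ‖α + (‖v‖⁻¹ • v) * β‖ ^ 2 = ‖α‖ ^ 2 + ‖‖v‖⁻¹ • v‖ ^ 2 * ‖β‖ ^ 2
          + 2 * (‖v‖⁻¹ * (v.imI ^ 2 + v.imJ ^ 2 + v.imK ^ 2)) := by
        rw [← mul_pow, ← norm_mul]
        generalize hr : ‖v‖⁻¹ = r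
        rw [quat_normsq, quat_normsq, quat_normsq, hv]
        simp
        ring
      have e2 : v.imI ^ 2 + v.imJ ^ 2 + v.imK ^ 2 = ‖v‖ * ‖v‖ := by
        rw [← pow_two, hvs, hre]; ring
      have e3 : ‖‖v‖⁻¹ • v‖ = 1 := by
        rw [norm_smul, norm_inv, norm_norm, inv_mul_cancel₀ hvn]
      rw [e2, inv_mul_cancel_left₀ hvn, e3] at e
      have := pow_le_pow_left₀ (norm_nonneg _) (h _ hJ) 2
      rw [e] at this
      linarith
  have h2 : ‖α * x - β * y‖ ^ 2 + ‖α * y + β * x‖ ^ 2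
      = (‖α‖ ^ 2 + ‖β‖ ^ 2) * (‖x‖ ^ 2 + ‖y‖ ^ 2) + 4 * (u * z).re := by
    simp only [quat_normsq, hu, hz]
    simp
    ring
  have h3 : (u * z).re ≤ ‖v‖ * ‖x * star y‖ := by
    have e1 : (u * z).re ≤ ‖u * z‖ := by
      apply le_of_sq_le_sq _ (norm_nonneg _)
      exact quat_re_sq_le _
    have e2 : ‖z‖ ≤ ‖x * star y‖ := by
      apply le_of_sq_le_sq _ (norm_nonneg _)
      rw [quat_normsq, quat_normsq (x * star y), hz]
      simp only [Quaternion.re_im, Quaternion.imI_im, Quaternion.imJ_im, Quaternion.imK_im]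
      nlinarith [sq_nonneg (x * star y).re]
    rw [norm_mul, huv] at e1
    exact e1.trans (by gcongr)
  rw [norm_mul, Quaternion.norm_star] at h3
  rw [h2]
  have h4 : 2 * (‖x‖ * ‖y‖) ≤ ‖x‖ ^ 2 + ‖y‖ ^ 2 := by nlinarith [sq_nonneg (‖x‖ - ‖y‖)]
  have h5 : 2 * (‖v‖ * (2 * (‖x‖ * ‖y‖))) ≤ 2 * (‖v‖ * (‖x‖ ^ 2 + ‖y‖ ^ 2)) := by gcongr
  have h6 : (‖α‖ ^ 2 + ‖β‖ ^ 2 + 2 * ‖v‖) * (‖x‖ ^ 2 + ‖y‖ ^ 2) ≤ d ^ 2 * (‖x‖ ^ 2 + ‖y‖ ^ 2) := by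
    gcongr
  nlinarith

theorem integral_cos_int (n : ℤ) :
    ∫ t in (0:ℝ)..(2 * Real.pi), Real.cos (n * t) = if n = 0 then 2 * Real.pi else 0 := by
  split_ifs with h
  · simp [h]
  · have hn : (n : ℝ) ≠ 0 := by exact_mod_cast h
    rw [intervalIntegral.integral_comp_mul_left (fun x => Real.cos x) hn, integral_cos]
    have : Real.sin (n * (2 * Real.pi)) = 0 := by
      rw [show (n : ℝ) * (2 * Real.pi) = ((2 * n : ℤ) : ℝ) * Real.pi by push_cast; ring]
      exact Real.sin_int_mul_pi _
    simp [this]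

theorem integral_sin_int (n : ℤ) :
    ∫ t in (0:ℝ)..(2 * Real.pi), Real.sin (n * t) = 0 := by
  by_cases h : n = 0
  · simp [h]
  · have hn : (n : ℝ) ≠ 0 := by exact_mod_cast h
    rw [intervalIntegral.integral_comp_mul_left (fun x => Real.sin x) hn, integral_sin]
    have : Real.cos (n * (2 * Real.pi)) = 1 := Real.cos_int_mul_two_pi n
    simp [this]

theorem trig_parseval (e : ℕ → ℤ) (he : Function.Injective e) (w : ℕ → Quaternion ℝ) (M : ℕ) :
    ∫ t in (0:ℝ)..(2 * Real.pi),
      (‖∑ m ∈ Finset.range M, Real.cos (e m * t) • w m‖ ^ 2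
        + ‖∑ m ∈ Finset.range M, Real.sin (e m * t) • w m‖ ^ 2)
      = 2 * Real.pi * ∑ m ∈ Finset.range M, ‖w m‖ ^ 2 := by
  have hp : ∀ t : ℝ, (‖∑ m ∈ Finset.range M, Real.cos (e m * t) • w m‖ ^ 2
        + ‖∑ m ∈ Finset.range M, Real.sin (e m * t) • w m‖ ^ 2)
      = ∑ m ∈ Finset.range M, ∑ l ∈ Finset.range M,
        Real.cos (((e m - e l : ℤ) : ℝ) * t) * inner ℝ (w m) (w l) := by
    intro t
    rw [← real_inner_self_eq_norm_sq, ← real_inner_self_eq_norm_sq]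
    simp only [sum_inner, inner_sum, real_inner_smul_left, real_inner_smul_right,
      ← Finset.sum_add_distrib]
    refine Finset.sum_congr rfl fun m _ => Finset.sum_congr rfl fun l _ => ?_
    push_cast
    rw [sub_mul, Real.cos_sub, real_inner_comm (w m) (w l)]
    ring
  simp only [hp]
  rw [intervalIntegral.integral_finsetSum]
  · rw [Finset.mul_sum]
    refine Finset.sum_congr rfl fun m hm => ?_
    rw [intervalIntegral.integral_finsetSum]
    · simp only [intervalIntegral.integral_mul_const, integral_cos_int]
      rw [Finset.sum_eq_single m]
      · simp
      · intro l _ hl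
        rw [if_neg, zero_mul]
        intro h
        exact hl (he (by omega))
      · intro h; exact absurd hm h
    · intro l _
      apply Continuous.intervalIntegrable
      fun_prop
  · intro m _
    apply Continuous.intervalIntegrable
    fun_prop


/-! ### The Hankel bound from a bounded symbol -/

/-- Lebesgue measure on one period. -/
def muP : Measure ℝ := volume.restrict (Set.Ioc 0 (2 * Real.pi))

instance : IsFiniteMeasure muP := by unfold muP; infer_instance

theorem interval_eq_muP {V : Type*} [NormedAddCommGroup V] [NormedSpace ℝ V] (f : ℝ → V) :
    ∫ t in (0:ℝ)..(2 * Real.pi), f t = ∫ t, f t ∂muP := by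
  rw [intervalIntegral.integral_of_le (by positivity)]; rfl

theorem alpha_bound {α β : Quaternion ℝ} {d : ℝ}
    (h : ∀ J : Quaternion ℝ, J ^ 2 = -1 → ‖α + J * β‖ ≤ d) : ‖α‖ ≤ d ∧ ‖β‖ ≤ d := by
  have h1 := h qi qi_sq
  have h2 := h (-qi) (iu_neg qi_sq)
  have e1 : α = (2 : ℝ)⁻¹ • ((α + qi * β) + (α + -qi * β)) := by
    rw [neg_mul, add_add_add_comm, add_neg_cancel, add_zero, ← two_smul ℝ α, smul_smul]
    norm_num
  have e2 : qi * β = (2 : ℝ)⁻¹ • ((α + qi * β) - (α + -qi * β)) := by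
    rw [neg_mul, add_sub_add_left_eq_sub, sub_neg_eq_add, ← two_smul ℝ (qi * β), smul_smul]
    norm_num
  have hn : ‖qi‖ = 1 := by
    have : ‖qi‖ ^ 2 = 1 := by rw [quat_normsq]; simp
    nlinarith [norm_nonneg qi]
  have e3 : ‖β‖ = ‖qi * β‖ := by rw [norm_mul, hn, one_mul]
  constructor
  · rw [e1, norm_smul]
    have := norm_add_le (α + qi * β) (α + -qi * β)
    rw [Real.norm_of_nonneg (by norm_num)]
    linarith
  · rw [e3, e2, norm_smul]
    have := norm_sub_le (α + qi * β) (α + -qi * β)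
    rw [Real.norm_of_nonneg (by norm_num)]
    linarith

theorem integrable_bdd {V : Type*} [NormedAddCommGroup V] {f : ℝ → V} {d : ℝ}
    (hf : AEStronglyMeasurable f muP)
    (hb : ∀ᵐ t ∂muP, ‖f t‖ ≤ d) : Integrable f muP :=
  Integrable.of_bound hf d hb

theorem integrable_cos_smul {α : ℝ → Quaternion ℝ} (h : Integrable α muP) (r : ℝ) :
    Integrable (fun t => Real.cos (r * t) • α t) muP :=
  h.bdd_smul (φ := fun t : ℝ => Real.cos (r * t)) 1 (Continuous.aestronglyMeasurable (by fun_prop))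
    (Filter.Eventually.of_forall fun t => Real.abs_cos_le_one _)

theorem integrable_sin_smul {α : ℝ → Quaternion ℝ} (h : Integrable α muP) (r : ℝ) :
    Integrable (fun t => Real.sin (r * t) • α t) muP :=
  h.bdd_smul (φ := fun t : ℝ => Real.sin (r * t)) 1 (Continuous.aestronglyMeasurable (by fun_prop))
    (Filter.Eventually.of_forall fun t => Real.abs_sin_le_one _)

theorem finite_bound {α β : ℝ → Quaternion ℝ} {d : ℝ}
    (hα : AEStronglyMeasurable α muP) (hβ : AEStronglyMeasurable β muP)
    (hb : ∀ᵐ t ∂muP, ∀ J : Quaternion ℝ, J ^ 2 = -1 → ‖α t + J * β t‖ ≤ d)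
    {γ : ℕ → Quaternion ℝ}
    (hγ : ∀ j : ℕ, γ j = (2 * Real.pi)⁻¹ • ∫ t, (Real.cos ((-((j : ℤ) + 1) : ℤ) * t) • α t
      + Real.sin ((-((j : ℤ) + 1) : ℤ) * t) • β t) ∂muP)
    (M K : ℕ) (a : ℕ → Quaternion ℝ) :
    ∑ m ∈ Finset.range M, ‖∑ k ∈ Finset.range K, γ (m + k) * a k‖ ^ 2
        ≤ d ^ 2 * ∑ k ∈ Finset.range K, ‖a k‖ ^ 2 := by
  set w : ℕ → Quaternion ℝ := fun m => ∑ k ∈ Finset.range K, γ (m + k) * a k with hw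
  set W := ∑ m ∈ Finset.range M, ‖w m‖ ^ 2 with hW
  set S := ∑ k ∈ Finset.range K, ‖a k‖ ^ 2 with hS
  let e : ℕ → ℤ := fun m => -((m : ℤ) + 1)
  let P : ℝ → Quaternion ℝ := fun t => ∑ m ∈ Finset.range M, Real.cos (e m * t) • w m
  let Q : ℝ → Quaternion ℝ := fun t => ∑ m ∈ Finset.range M, Real.sin (e m * t) • w m
  let x : ℝ → Quaternion ℝ := fun t => ∑ k ∈ Finset.range K, Real.cos ((k : ℤ) * t) • a k
  let y : ℝ → Quaternion ℝ := fun t => ∑ k ∈ Finset.range K, Real.sin ((k : ℤ) * t) • a k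
  have hPQ : ∫ t, (‖P t‖ ^ 2 + ‖Q t‖ ^ 2) ∂muP = 2 * Real.pi * W := by
    rw [← interval_eq_muP]
    exact trig_parseval e (fun m n h => by simp only [e] at h; omega) w M
  have hxy : ∫ t, (‖x t‖ ^ 2 + ‖y t‖ ^ 2) ∂muP = 2 * Real.pi * S := by
    rw [← interval_eq_muP]
    exact trig_parseval (fun k => (k : ℤ)) (fun m n h => by simpa using h) a K
  have hcont : ∀ f : ℝ → ℝ, Continuous f → Integrable f muP := fun f hf =>
    (hf.integrableOn_Ioc : IntegrableOn f (Set.Ioc 0 (2 * Real.pi)) volume)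
  have iPQ : Integrable (fun t => ‖P t‖ ^ 2 + ‖Q t‖ ^ 2) muP := hcont _ (by fun_prop)
  have ixy : Integrable (fun t => ‖x t‖ ^ 2 + ‖y t‖ ^ 2) muP := hcont _ (by fun_prop)
  let s : ℕ → ℝ → Quaternion ℝ := fun j t => Real.cos ((-((j : ℤ) + 1) : ℤ) * t) • α t
      + Real.sin ((-((j : ℤ) + 1) : ℤ) * t) • β t
  have is : ∀ j, Integrable (s j) muP := by
    intro j
    have ia : Integrable α muP := integrable_bdd hα (hb.mono fun t ht => (alpha_bound ht).1)
    have ib : Integrable β muP := integrable_bdd hβ (hb.mono fun t ht => (alpha_bound ht).2)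
    refine Integrable.add ?_ ?_
    · exact integrable_cos_smul ia _
    · exact integrable_sin_smul ib _
  have isa : ∀ j k, Integrable (fun t => s j t * a k) muP := fun j k => (is j).mul_const _
  have iin : ∀ m k, Integrable (fun t => inner ℝ (w m) (s (m + k) t * a k)) muP := fun m k =>
    (isa (m + k) k).const_inner _
  have hIntg : ∀ m k, ∫ t, inner ℝ (w m) (s (m + k) t * a k) ∂muP
      = 2 * Real.pi * inner ℝ (w m) (γ (m + k) * a k) := by
    intro m k
    rw [integral_inner (isa _ _)]
    have e1 : ∫ t, s (m + k) t * a k ∂muP = (∫ t, s (m + k) t ∂muP) * a k := by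
      exact ((ContinuousLinearMap.mul ℝ (Quaternion ℝ)).flip (a k)).integral_comp_comm (is (m + k))
    rw [e1, hγ, smul_mul_assoc, real_inner_smul_right, ← mul_assoc,
      mul_inv_cancel₀ (by positivity), one_mul]
  have hpt : ∀ t, inner ℝ (P t) (α t * x t - β t * y t) + inner ℝ (Q t) (α t * y t + β t * x t)
      = ∑ m ∈ Finset.range M, ∑ k ∈ Finset.range K, inner ℝ (w m) (s (m + k) t * a k) := by
    intro t
    simp only [P, Q]
    rw [sum_inner, sum_inner, ← Finset.sum_add_distrib]
    refine Finset.sum_congr rfl fun m _ => ?_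
    simp only [x, y, s, Finset.mul_sum, inner_sum, inner_sub_right,
      inner_add_right, mul_smul_comm, add_mul, smul_mul_assoc, real_inner_smul_left,
      real_inner_smul_right, ← Finset.sum_add_distrib, ← Finset.sum_sub_distrib]
    refine Finset.sum_congr rfl fun k _ => ?_
    have e1 : ((-(((m + k : ℕ) : ℤ) + 1) : ℤ) : ℝ) * t = (e m : ℝ) * t - ((k : ℤ) : ℝ) * t := by
      simp only [e]; push_cast; ring
    rw [e1, Real.cos_sub, Real.sin_sub]
    ring
  have hL : ∫ t, (∑ m ∈ Finset.range M, ∑ k ∈ Finset.range K, inner ℝ (w m) (s (m + k) t * a k)) ∂muP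
      = 2 * Real.pi * W := by
    rw [integral_finsetSum _ (fun m _ => integrable_finsetSum _ fun k _ => iin m k), hW,
      Finset.mul_sum]
    refine Finset.sum_congr rfl fun m _ => ?_
    rw [integral_finsetSum _ (fun k _ => iin m k)]
    simp only [hIntg]
    rw [← Finset.mul_sum, ← inner_sum, ← real_inner_self_eq_norm_sq]
  have hle : ∫ t, (∑ m ∈ Finset.range M, ∑ k ∈ Finset.range K, inner ℝ (w m) (s (m + k) t * a k)) ∂muP
      ≤ ∫ t, ((1 / 2) * (‖P t‖ ^ 2 + ‖Q t‖ ^ 2) + (1 / 2) * (d ^ 2 * (‖x t‖ ^ 2 + ‖y t‖ ^ 2))) ∂muP := by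
    apply integral_mono_ae
    · exact integrable_finsetSum _ fun m _ => integrable_finsetSum _ fun k _ => iin m k
    · exact (iPQ.const_mul _).add ((ixy.const_mul _).const_mul _)
    · filter_upwards [hb] with t ht
      rw [← hpt]
      have h1 := pointwise_bound ht (x t) (y t)
      have h2 := real_inner_le_norm (P t) (α t * x t - β t * y t)
      have h3 := real_inner_le_norm (Q t) (α t * y t + β t * x t)
      nlinarith [sq_nonneg (‖P t‖ - ‖α t * x t - β t * y t‖),
        sq_nonneg (‖Q t‖ - ‖α t * y t + β t * x t‖)]
  rw [hL, integral_add (iPQ.const_mul _) ((ixy.const_mul _).const_mul _), integral_const_mul,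
    integral_const_mul, integral_const_mul, hPQ, hxy] at hle
  have : 2 * Real.pi * W ≤ 2 * Real.pi * (d ^ 2 * S) := by linarith
  exact le_of_mul_le_mul_left this (by positivity)


/-! ### Slice functions: measurability and bounds -/

/-- even part -/
def sA (g : Quaternion ℝ → Quaternion ℝ) (t : ℝ) : Quaternion ℝ :=
  (2 : ℝ)⁻¹ • (g (eI qi t) + g (eI qi (-t)))

/-- odd part -/
def sB (g : Quaternion ℝ → Quaternion ℝ) (t : ℝ) : Quaternion ℝ :=
  -((2 : ℝ)⁻¹ • (qi * (g (eI qi t) - g (eI qi (-t)))))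

theorem quat_div_two (q : Quaternion ℝ) : q / 2 = (2 : ℝ)⁻¹ • q := by
  have h2 : (2 : Quaternion ℝ) = ((2 : ℝ) : Quaternion ℝ) := by norm_cast
  rw [h2, div_eq_mul_inv, ← Quaternion.coe_inv, Quaternion.mul_coe_eq_smul]

theorem eI_neg (I : Quaternion ℝ) (t : ℝ) : eI I (-t) = eI (-I) t := by
  simp [eI]

theorem eI_neg' (I : Quaternion ℝ) (t : ℝ) :
    eI I (-t) = ((Real.cos t : ℝ) : Quaternion ℝ) - Real.sin t • I := by
  simp [eI, sub_eq_add_neg]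

theorem slice_repr {g : Quaternion ℝ → Quaternion ℝ} (hg : IsSlice g) {J : Quaternion ℝ}
    (hJ : J ^ 2 = -1) (t : ℝ) : g (eI J t) = sA g t + J * sB g t := by
  have h := hg (Real.cos t) (Real.sin t) qi J qi_sq hJ (by
    have := Real.sin_sq_add_cos_sq t; linarith)
  rw [← eI_neg' qi t] at h
  change g (eI J t) = _ * g (eI qi t) + _ at h
  rw [h, quat_div_two, quat_div_two, sA, sB]
  simp only [smul_mul_assoc, mul_neg, mul_smul_comm, ← smul_neg, ← smul_add]
  congr 1
  noncomm_ring

theorem sA_eq {g : Quaternion ℝ → Quaternion ℝ} (hg : IsSlice g) {J : Quaternion ℝ}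
    (hJ : J ^ 2 = -1) (t : ℝ) : sA g t = (2 : ℝ)⁻¹ • (g (eI J t) + g (eI J (-t))) := by
  rw [eI_neg, slice_repr hg hJ, slice_repr hg (iu_neg hJ)]
  rw [neg_mul, add_add_add_comm, add_neg_cancel, add_zero, ← two_smul ℝ (sA g t), smul_smul]
  norm_num

theorem sB_eq {g : Quaternion ℝ → Quaternion ℝ} (hg : IsSlice g) {J : Quaternion ℝ}
    (hJ : J ^ 2 = -1) (t : ℝ) : sB g t = -((2 : ℝ)⁻¹ • (J * (g (eI J t) - g (eI J (-t))))) := by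
  rw [eI_neg, slice_repr hg hJ, slice_repr hg (iu_neg hJ)]
  rw [neg_mul, add_sub_add_left_eq_sub, sub_neg_eq_add, mul_add, ← mul_assoc, iu_mul hJ,
    ← two_smul ℝ, smul_smul]
  norm_num

theorem reflect_mp : MeasurePreserving (fun t : ℝ => 2 * Real.pi - t) muP muP := by
  have h := (Measure.measurePreserving_sub_left (volume : Measure ℝ) (2 * Real.pi)).restrict_preimage
    (s := Set.Ioc 0 (2 * Real.pi)) measurableSet_Ioc
  have e : (fun t : ℝ => 2 * Real.pi - t) ⁻¹' Set.Ioc 0 (2 * Real.pi) = Set.Ico 0 (2 * Real.pi) := by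
    ext t; simp [and_comm]
  rw [e, Measure.restrict_congr_set Ico_ae_eq_Ioc] at h
  exact h

theorem eI_measurable : Measurable (fun p : IU × ℝ => eI p.1.1 p.2) := by
  have h1 : Measurable (fun p : IU × ℝ => p.1.1) := measurable_subtype_coe.comp measurable_fst
  have h2 : Measurable (fun p : IU × ℝ => ((Real.cos p.2 : ℝ) : Quaternion ℝ)) :=
    (Quaternion.continuous_coe.comp Real.continuous_cos).measurable.comp measurable_snd
  have h3 : Measurable (fun p : IU × ℝ => Real.sin p.2) :=
    Real.continuous_sin.measurable.comp measurable_snd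
  exact h2.add (h3.smul h1)

theorem sphere_ac (σ : Measure IU) :
    Measure.map (fun p : IU × ℝ => eI p.1.1 p.2) (σ.prod muP) ≪ sphereMeasure σ := by
  apply Measure.absolutelyContinuous_smul
  exact ENNReal.inv_ne_zero.2 ENNReal.ofReal_ne_top

theorem sphere_ac' (σ : Measure IU) :
    sphereMeasure σ ≪ Measure.map (fun p : IU × ℝ => eI p.1.1 p.2) (σ.prod muP) :=
  Measure.smul_absolutelyContinuous

theorem slice_meas (σ : Measure IU) [IsProbabilityMeasure σ] {g : Quaternion ℝ → Quaternion ℝ}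
    (hg : IsSlice g) (hm : AEStronglyMeasurable g (sphereMeasure σ)) :
    AEStronglyMeasurable (sA g) muP ∧ AEStronglyMeasurable (sB g) muP := by
  have h1 := (hm.mono_ac (sphere_ac σ)).comp_measurable eI_measurable
  obtain ⟨J, hJ⟩ := h1.prodMk_left.exists
  have hJ' : AEStronglyMeasurable (fun t => g (eI J.1 t)) muP := hJ
  have hJ2 : AEStronglyMeasurable (fun t => g (eI J.1 (-t))) muP := by
    have := hJ'.comp_measurePreserving reflect_mp
    refine this.congr (Filter.Eventually.of_forall fun t => ?_)
    simp [Function.comp, eI_periodic]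
  constructor
  · have e : sA g = fun t => (2 : ℝ)⁻¹ • (g (eI J.1 t) + g (eI J.1 (-t))) :=
      funext fun t => sA_eq hg J.2 t
    rw [e]
    exact (hJ'.add hJ2).const_smul (2 : ℝ)⁻¹
  · have e : sB g = fun t => -((2 : ℝ)⁻¹ • (J.1 * (g (eI J.1 t) - g (eI J.1 (-t))))) :=
      funext fun t => sB_eq hg J.2 t
    rw [e]
    exact (((hJ'.sub hJ2).const_mul J.1).const_smul (2 : ℝ)⁻¹).neg

theorem conj_transitive {I J : Quaternion ℝ} (hI : I ^ 2 = -1) (hJ : J ^ 2 = -1) :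
    ∃ u : Quaternion ℝ, u ≠ 0 ∧ u⁻¹ * I * u = J := by
  have key : ∃ u : Quaternion ℝ, u ≠ 0 ∧ I * u = u * J := by
    by_cases h : I + J = 0
    · have hJI : J = -I := by rw [eq_neg_iff_add_eq_zero, add_comm]; exact h
      obtain ⟨h0, h1⟩ := iu_coords hI
      rw [hJI]
      by_cases hz : I.imI = 0 ∧ I.imJ = 0
      · refine ⟨qi, fun e => by simpa using congrArg (fun q : Quaternion ℝ => q.imI) e, ?_⟩
        ext <;> simp [h0, hz.1, hz.2]
      · refine ⟨I.imI • qj - I.imJ • qi, fun e => hz ?_, ?_⟩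
        · have e1 := congrArg (fun q : Quaternion ℝ => q.imI) e
          have e2 := congrArg (fun q : Quaternion ℝ => q.imJ) e
          simp at e1 e2
          exact ⟨e2, e1⟩
        · ext <;> simp [h0] <;> ring
    · refine ⟨I + J, h, ?_⟩
      rw [mul_add, add_mul, iu_mul hI, iu_mul hJ, add_comm]
  obtain ⟨u, hu, h⟩ := key
  exact ⟨u, hu, by rw [mul_assoc, h, inv_mul_cancel_left₀ hu]⟩

theorem eI_conj {I u : Quaternion ℝ} (hu : u ≠ 0) (t : ℝ) :
    u⁻¹ * eI I t * u = eI (u⁻¹ * I * u) t := by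
  simp only [eI, mul_add, add_mul, mul_smul_comm, smul_mul_assoc]
  congr 1
  rw [Quaternion.mul_coe_eq_smul, smul_mul_assoc, inv_mul_cancel₀ hu, ← Quaternion.coe_mul_eq_smul, mul_one]

theorem iu_conj {I u : Quaternion ℝ} (hu : u ≠ 0) (hI : I ^ 2 = -1) : (u⁻¹ * I * u) ^ 2 = -1 := by
  rw [pow_two]
  calc u⁻¹ * I * u * (u⁻¹ * I * u) = u⁻¹ * (I * ((u * u⁻¹) * I)) * u := by
        simp only [mul_assoc]
    _ = -1 := by
        rw [mul_inv_cancel₀ hu, one_mul, iu_mul hI, mul_neg, mul_one, neg_mul, inv_mul_cancel₀ hu]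

theorem slice_bound (σ : Measure IU) [IsProbabilityMeasure σ]
    (hinv : ∀ u : Quaternion ℝ, ‖u‖ = 1 →
      Measure.map (fun q => u⁻¹ * q * u) (sphereMeasure σ) = sphereMeasure σ)
    {g : Quaternion ℝ → Quaternion ℝ} (hg : IsSlice g)
    (htop : eLpNorm g ⊤ (sphereMeasure σ) ≠ ⊤) :
    ∀ᵐ t ∂muP, ∀ J : Quaternion ℝ, J ^ 2 = -1 →
      ‖sA g t + J * sB g t‖ ≤ (eLpNorm g ⊤ (sphereMeasure σ)).toReal := by
  set d := (eLpNorm g ⊤ (sphereMeasure σ)).toReal with hd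
  have h1 : ∀ᵐ q ∂(sphereMeasure σ), ‖g q‖ ≤ d := by
    filter_upwards [ae_le_eLpNormEssSup (f := g) (μ := sphereMeasure σ)] with q hq
    rw [← eLpNorm_exponent_top] at hq
    have := ENNReal.toReal_mono htop hq
    simpa [hd] using this
  have h2 : ∀ u : Quaternion ℝ, u ≠ 0 → ∀ᵐ q ∂(sphereMeasure σ), ‖g (u⁻¹ * q * u)‖ ≤ d := by
    intro u hu
    have hun : ‖u‖ ≠ 0 := by simpa using hu
    set v := ‖u‖⁻¹ • u with hv
    have hvn : ‖v‖ = 1 := by rw [hv, norm_smul, norm_inv, norm_norm, inv_mul_cancel₀ hun]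
    have e : ∀ q : Quaternion ℝ, v⁻¹ * q * v = u⁻¹ * q * u := by
      intro q
      have : v⁻¹ = ‖u‖ • u⁻¹ := by
        apply inv_eq_of_mul_eq_one_left
        rw [hv, smul_mul_smul_comm, inv_mul_cancel₀ hu, mul_inv_cancel₀ hun, one_smul]
      rw [this, hv, smul_mul_assoc, smul_mul_smul_comm, mul_inv_cancel₀ hun, one_smul]
    have h3 := h1
    rw [← hinv v hvn] at h3
    have h4 := ae_of_ae_map (by
      apply Measurable.aemeasurable
      apply Continuous.measurable
      fun_prop) h3
    filter_upwards [h4] with q hq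
    rwa [e] at hq
  obtain ⟨D, hDc, hDd⟩ := TopologicalSpace.exists_countable_dense (Quaternion ℝ)
  have h3 : ∀ᵐ q ∂(sphereMeasure σ), ∀ u ∈ D, u ≠ 0 → ‖g (u⁻¹ * q * u)‖ ≤ d := by
    rw [ae_ball_iff hDc]
    intro u _
    by_cases hu : u = 0
    · simp [hu]
    · filter_upwards [h2 u hu] with q hq _ using hq
  have h4 := ae_of_ae_map eI_measurable.aemeasurable ((sphere_ac σ).ae_le h3)
  obtain ⟨I, hI⟩ := (Measure.ae_ae_of_ae_prod h4).exists
  filter_upwards [hI] with t ht J hJ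
  have hI2 : I.1 ^ 2 = -1 := I.2
  obtain ⟨u, hu, rfl⟩ := conj_transitive hI2 hJ
  let F : Quaternion ℝ → ℝ := fun u => ‖sA g t + (u⁻¹ * I.1 * u) * sB g t‖
  have hF : ContinuousAt F u := by
    have : ContinuousAt (fun u : Quaternion ℝ => u⁻¹) u := continuousAt_inv₀ hu
    fun_prop
  have hne : (nhdsWithin u D).NeBot := mem_closure_iff_nhdsWithin_neBot.1 (hDd u)
  have hT : Filter.Tendsto F (nhdsWithin u D) (nhds (F u)) := hF.mono_left nhdsWithin_le_nhds
  refine le_of_tendsto hT ?_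
  have hev : ∀ᶠ v in nhdsWithin u D, v ≠ 0 :=
    (nhdsWithin_le_nhds : nhdsWithin u D ≤ nhds u) (isOpen_ne.mem_nhds hu)
  filter_upwards [hev, self_mem_nhdsWithin] with v hv hvD
  have := ht v hvD hv
  rw [eI_conj hv, slice_repr hg (iu_conj hv hI2)] at this
  exact this


/-! ### Direction 1 -/

theorem slice_sub {f g : Quaternion ℝ → Quaternion ℝ} (hf : IsSlice f) (hg : IsSlice g) :
    IsSlice (f - g) := by
  intro x y I J hI hJ hxy
  simp only [Pi.sub_apply]
  rw [hf x y I J hI hJ hxy, hg x y I J hI hJ hxy]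
  simp only [mul_sub]
  abel

theorem slice_integrable (σ : Measure IU) [IsProbabilityMeasure σ]
    (hinv : ∀ u : Quaternion ℝ, ‖u‖ = 1 →
      Measure.map (fun q => u⁻¹ * q * u) (sphereMeasure σ) = sphereMeasure σ)
    {g : Quaternion ℝ → Quaternion ℝ} (hg : IsSlice g)
    (hm : AEStronglyMeasurable g (sphereMeasure σ))
    (htop : eLpNorm g ⊤ (sphereMeasure σ) ≠ ⊤) :
    Integrable (sA g) muP ∧ Integrable (sB g) muP := by
  obtain ⟨h1, h2⟩ := slice_meas σ hg hm
  have hb := slice_bound σ hinv hg htop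
  exact ⟨integrable_bdd h1 (hb.mono fun t ht => (alpha_bound ht).1),
    integrable_bdd h2 (hb.mono fun t ht => (alpha_bound ht).2)⟩

theorem eI_mul_expand {I : Quaternion ℝ} (hI : I ^ 2 = -1) (s : ℝ) (α β : Quaternion ℝ) :
    eI I (-s) * (α + I * β) = (Real.cos s • α + Real.sin s • β)
      + I * (Real.cos s • β - Real.sin s • α) := by
  rw [eI_neg', sub_mul, Quaternion.coe_mul_eq_smul, smul_mul_assoc, mul_add, ← mul_assoc,
    iu_mul hI]
  simp only [mul_sub, mul_smul_comm, smul_add, neg_mul, one_mul, smul_neg]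
  abel

theorem coef_expand {g : Quaternion ℝ → Quaternion ℝ} (hg : IsSlice g)
    (hi : Integrable (sA g) muP ∧ Integrable (sB g) muP) {I : Quaternion ℝ} (hI : I ^ 2 = -1)
    (n : ℤ) :
    fourierCoef g I n = (2 * Real.pi)⁻¹ • ((∫ t, (Real.cos (n * t) • sA g t
      + Real.sin (n * t) • sB g t) ∂muP)
      + I * ∫ t, (Real.cos (n * t) • sB g t - Real.sin (n * t) • sA g t) ∂muP) := by
  have i1 : Integrable (fun t => Real.cos (n * t) • sA g t + Real.sin (n * t) • sB g t) muP :=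
    (integrable_cos_smul hi.1 n).add (integrable_sin_smul hi.2 n)
  have i2 : Integrable (fun t => Real.cos (n * t) • sB g t - Real.sin (n * t) • sA g t) muP :=
    (integrable_cos_smul hi.2 n).sub (integrable_sin_smul hi.1 n)
  have e : I * ∫ t, (Real.cos (n * t) • sB g t - Real.sin (n * t) • sA g t) ∂muP
      = ∫ t, I * (Real.cos (n * t) • sB g t - Real.sin (n * t) • sA g t) ∂muP :=
    (((ContinuousLinearMap.mul ℝ (Quaternion ℝ)) I).integral_comp_comm i2).symm
  rw [fourierCoef, interval_eq_muP, e, ← integral_add i1 (i2.const_mul I)]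
  congr 2
  funext t
  rw [slice_repr hg hI, eI_mul_expand hI]

theorem coef_formula {g : Quaternion ℝ → Quaternion ℝ} (hg : IsSlice g)
    (hi : Integrable (sA g) muP ∧ Integrable (sB g) muP) {n : ℤ} {x : Quaternion ℝ}
    (hx : ∀ I : Quaternion ℝ, I ^ 2 = -1 → fourierCoef g I n = x) :
    x = (2 * Real.pi)⁻¹ • ∫ t, (Real.cos (n * t) • sA g t + Real.sin (n * t) • sB g t) ∂muP := by
  have h1 := (coef_expand hg hi qi_sq n).symm.trans (hx _ qi_sq)
  have h2 := (coef_expand hg hi (iu_neg qi_sq) n).symm.trans (hx _ (iu_neg qi_sq))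
  have h3 : x = (2 : ℝ)⁻¹ • (x + x) := by
    rw [← two_smul ℝ x, smul_smul]; norm_num
  rw [h3]
  nth_rewrite 1 [← h1]
  rw [← h2]
  rw [neg_mul]
  module

theorem coef_sub {f g : Quaternion ℝ → Quaternion ℝ} (hf : IsSlice f) (hg : IsSlice g)
    (hif : Integrable (sA f) muP ∧ Integrable (sB f) muP)
    (hig : Integrable (sA g) muP ∧ Integrable (sB g) muP)
    {I : Quaternion ℝ} (hI : I ^ 2 = -1) (n : ℤ) :
    fourierCoef (f - g) I n = fourierCoef f I n - fourierCoef g I n := by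
  have hIntg : ∀ h : Quaternion ℝ → Quaternion ℝ, IsSlice h →
      (Integrable (sA h) muP ∧ Integrable (sB h) muP) →
      Integrable (fun t => eI I (-(n * t)) * h (eI I t)) muP := by
    intro h hh hi
    have i1 : Integrable (fun t => Real.cos (n * t) • sA h t + Real.sin (n * t) • sB h t) muP :=
      (integrable_cos_smul hi.1 n).add (integrable_sin_smul hi.2 n)
    have i2 : Integrable (fun t => Real.cos (n * t) • sB h t - Real.sin (n * t) • sA h t) muP :=
      (integrable_cos_smul hi.2 n).sub (integrable_sin_smul hi.1 n)
    refine (i1.add (i2.const_mul I)).congr (Filter.Eventually.of_forall fun t => ?_)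
    simp only [Pi.add_apply]
    rw [slice_repr hh hI, eI_mul_expand hI]
  simp only [fourierCoef, interval_eq_muP]
  rw [← smul_sub, ← integral_sub (hIntg f hf hif) (hIntg g hg hig)]
  simp only [Pi.sub_apply, mul_sub]

theorem dir_one (σ : Measure IU) [IsProbabilityMeasure σ]
    (hinv : ∀ u : Quaternion ℝ, ‖u‖ = 1 →
      Measure.map (fun q => u⁻¹ * q * u) (sphereMeasure σ) = sphereMeasure σ)
    {φ f : Quaternion ℝ → Quaternion ℝ} (hφ : IsSlice φ)
    (hφm : AEStronglyMeasurable φ (sphereMeasure σ))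
    (hφtop : eLpNorm φ ⊤ (sphereMeasure σ) ≠ ⊤)
    {c : ℤ → Quaternion ℝ}
    (hc : ∀ I : Quaternion ℝ, I ^ 2 = -1 → ∀ n : ℤ, fourierCoef φ I n = c n)
    (hf : IsSlice f) (hfm : AEStronglyMeasurable f (sphereMeasure σ))
    (hftop : eLpNorm f ⊤ (sphereMeasure σ) ≠ ⊤)
    (hf0 : ∀ I : Quaternion ℝ, I ^ 2 = -1 → ∀ n : ℤ, n < 0 → fourierCoef f I n = 0) :
    Hk (eLpNorm (φ - f) ⊤ (sphereMeasure σ)).toReal (fun j : ℕ => c (-((j : ℤ) + 1))) := by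
  have hs := slice_sub hφ hf
  have hm := hφm.sub hfm
  have htop : eLpNorm (φ - f) ⊤ (sphereMeasure σ) ≠ ⊤ :=
    ((MemLp.sub ⟨hφm, hφtop.lt_top⟩ ⟨hfm, hftop.lt_top⟩ : MemLp (φ - f) ⊤ _).2).ne
  have i1 := slice_integrable σ hinv hφ hφm hφtop
  have i2 := slice_integrable σ hinv hf hfm hftop
  have i3 := slice_integrable σ hinv hs hm htop
  obtain ⟨m1, m2⟩ := slice_meas σ hs hm
  have hγ : ∀ j : ℕ, c (-((j : ℤ) + 1)) = (2 * Real.pi)⁻¹ • ∫ t,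
      (Real.cos ((-((j : ℤ) + 1) : ℤ) * t) • sA (φ - f) t
      + Real.sin ((-((j : ℤ) + 1) : ℤ) * t) • sB (φ - f) t) ∂muP := by
    intro j
    refine coef_formula hs i3 fun I hI => ?_
    rw [coef_sub hφ hf i1 i2 hI, hc I hI, hf0 I hI _ (by omega), sub_zero]
  exact hk_of_finite ENNReal.toReal_nonneg
    (finite_bound (γ := fun j : ℕ => c (-((j : ℤ) + 1))) m1 m2 (slice_bound σ hinv hs htop) hγ)


/-! ### Fejer means -/

theorem Icc_succ_sum {V : Type*} [AddCommMonoid V] (x : ℤ → V) (n : ℕ) :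
    ∑ k ∈ Finset.Icc (-(n : ℤ)) n, x k = (∑ j ∈ Finset.range n, x ((n : ℤ) - j)) +
      (∑ j ∈ Finset.range n, x ((j : ℤ) - n)) + x 0 := by
  induction n with
  | zero => simp
  | succ n ih =>
    have e : Finset.Icc (-((n + 1 : ℕ) : ℤ)) ((n + 1 : ℕ) : ℤ)
        = insert ((n : ℤ) + 1) (insert (-((n : ℤ) + 1)) (Finset.Icc (-(n : ℤ)) n)) := by
      ext k; simp only [Finset.mem_Icc, Finset.mem_insert]; push_cast; omega
    rw [e, Finset.sum_insert (by simp only [Finset.mem_Icc, Finset.mem_insert]; omega),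
      Finset.sum_insert (by simp only [Finset.mem_Icc]; omega), ih, Finset.sum_range_succ',
      Finset.sum_range_succ']
    have e1 : ∀ j : ℕ, (((n + 1 : ℕ) : ℤ) - ((j + 1 : ℕ) : ℤ)) = (n : ℤ) - j := by
      intro j; push_cast; ring
    have e2 : ∀ j : ℕ, (((j + 1 : ℕ) : ℤ) - ((n + 1 : ℕ) : ℤ)) = (j : ℤ) - n := by
      intro j; push_cast; ring
    simp only [e1, e2]
    have e3 : ((n + 1 : ℕ) : ℤ) - ((0 : ℕ) : ℤ) = (n : ℤ) + 1 := by push_cast; ring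
    have e4 : ((0 : ℕ) : ℤ) - ((n + 1 : ℕ) : ℤ) = -((n : ℤ) + 1) := by push_cast; ring
    rw [e3, e4]
    abel

theorem sum_diag {V : Type*} [AddCommMonoid V] (x : ℤ → V) (N : ℕ) :
    ∑ i ∈ Finset.range N, ∑ j ∈ Finset.range N, x ((i : ℤ) - j)
      = ∑ n ∈ Finset.range N, ∑ k ∈ Finset.Icc (-(n : ℤ)) n, x k := by
  induction N with
  | zero => simp
  | succ n ih =>
    rw [Finset.sum_range_succ (fun n : ℕ => ∑ k ∈ Finset.Icc (-(n : ℤ)) n, x k) n, ← ih,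
      Finset.sum_range_succ, Icc_succ_sum]
    simp only [Finset.sum_range_succ, Finset.sum_add_distrib, sub_self]
    abel

/-- Fejer mean of the series with coefficients `d` -/
def fejer (d : ℤ → Quaternion ℝ) (J : Quaternion ℝ) (t : ℝ) (N : ℕ) : Quaternion ℝ :=
  (N : ℝ)⁻¹ • ∑ m ∈ Finset.range N, ∑ k ∈ Finset.Icc (-(m : ℤ)) m, eI J (k * t) * d k

theorem fejer_bound {C : ℝ} (hC : 0 ≤ C) {d : ℤ → Quaternion ℝ}
    (h : ∀ N : ℕ, Hk C (fun k : ℕ => d ((N : ℤ) - 1 - k))) {J : Quaternion ℝ} (hJ : J ^ 2 = -1)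
    (t : ℝ) (N : ℕ) : ‖fejer d J t N‖ ≤ C := by
  have h1 := fejer_aux hC (h N) N (fun m => eI J (((N : ℝ) - 1 - m) * t)) (fun k => eI J (-(k * t)))
    (fun _ => eI_norm hJ _) (fun _ => eI_norm hJ _)
  have e : ∑ k ∈ Finset.range N, ∑ m ∈ Finset.range N, eI J (-((k : ℝ) * t)) *
        (eI J (((N : ℝ) - 1 - m) * t) * d ((N : ℤ) - 1 - ((m + k : ℕ) : ℤ)))
      = ∑ m ∈ Finset.range N, ∑ k ∈ Finset.Icc (-(m : ℤ)) m, eI J (k * t) * d k := by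
    refine Eq.trans ?_ (sum_diag (fun k : ℤ => eI J (k * t) * d k) N)
    refine Finset.sum_comm.trans ?_
    rw [← Finset.sum_range_reflect (fun i : ℕ => ∑ j ∈ Finset.range N,
      eI J (((i : ℤ) - (j : ℤ) : ℤ) * t) * d ((i : ℤ) - j)) N]
    refine Finset.sum_congr rfl fun i hi => Finset.sum_congr rfl fun k hk => ?_
    have hi' := Finset.mem_range.1 hi
    have c1 : ((N - 1 - i : ℕ) : ℤ) = (N : ℤ) - 1 - i := by omega
    have c2 : ((N - 1 - i : ℕ) : ℝ) = (N : ℝ) - 1 - i := by exact_mod_cast c1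
    rw [← mul_assoc, ← eI_add hJ]
    push_cast
    rw [c1, c2]
    congr 2
    · ring
    · ring
  rw [e] at h1
  rw [fejer, norm_smul, norm_inv, RCLike.norm_natCast]
  rcases Nat.eq_zero_or_pos N with h0 | h0
  · simp [h0, hC]
  · have : (0 : ℝ) < N := by exact_mod_cast h0
    rw [inv_mul_le_iff₀ this, mul_comm]
    exact h1

theorem coef_summable {C : ℝ} (hC : 0 ≤ C) {d : ℤ → Quaternion ℝ}
    (h : ∀ N : ℕ, Hk C (fun k : ℕ => d ((N : ℤ) - 1 - k))) : Summable fun n => ‖d n‖ ^ 2 := by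
  refine summable_of_sum_le (c := C ^ 2) (fun n => by positivity) fun u => ?_
  obtain ⟨n, hn⟩ : ∃ n : ℕ, ∀ k ∈ u, k.natAbs ≤ n :=
    ⟨u.sup Int.natAbs, fun k hk => Finset.le_sup (f := Int.natAbs) hk⟩
  have h1 := hk_finite hC (h (n + 1)) (2 * n + 1) 1 (fun _ => 1)
  simp only [Finset.sum_range_one, mul_one, norm_one, one_pow, add_zero] at h1
  refine le_trans ?_ h1
  have hinj : Set.InjOn (fun m : ℕ => ((n + 1 : ℕ) : ℤ) - 1 - m) (Finset.range (2 * n + 1)) := by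
    intro a _ b _ hab
    simp only at hab
    omega
  rw [← Finset.sum_image (f := fun k => ‖d k‖ ^ 2) hinj]
  refine Finset.sum_le_sum_of_subset_of_nonneg ?_ fun _ _ _ => by positivity
  intro k hk
  have := hn k hk
  simp only [Finset.mem_image, Finset.mem_range]
  exact ⟨(n - k).toNat, by omega, by omega⟩


/-! ### The `L²` limit of the series -/

/-- Pairs of quaternions with Euclidean norm -/
abbrev W2 := WithLp 2 (Quaternion ℝ × Quaternion ℝ)

/-- the `k`-th term of the series (cosine part and sine part) -/
def fk (d : ℤ → Quaternion ℝ) (k : ℤ) (t : ℝ) : W2 :=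
  WithLp.toLp 2 (Real.cos (k * t) • d k, Real.sin (k * t) • d k)

theorem fk_continuous (d : ℤ → Quaternion ℝ) (k : ℤ) : Continuous (fk d k) := by
  unfold fk
  exact (WithLp.prod_continuous_toLp 2 _ _).comp (by fun_prop)

theorem fk_inner (d : ℤ → Quaternion ℝ) (k l : ℤ) (t : ℝ) :
    inner ℝ (fk d k t) (fk d l t) = Real.cos ((k - l : ℤ) * t) * inner ℝ (d k) (d l) := by
  rw [WithLp.prod_inner_apply]
  simp only [fk, real_inner_smul_left, real_inner_smul_right]
  push_cast
  rw [sub_mul, Real.cos_sub]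
  ring

theorem fk_norm (d : ℤ → Quaternion ℝ) (k : ℤ) (t : ℝ) : ‖fk d k t‖ = ‖d k‖ := by
  have h := fk_inner d k k t
  rw [real_inner_self_eq_norm_sq, real_inner_self_eq_norm_sq] at h
  simp only [sub_self, Int.cast_zero, zero_mul, Real.cos_zero, one_mul] at h
  exact (sq_eq_sq₀ (norm_nonneg _) (norm_nonneg _)).1 h

theorem fk_memLp (d : ℤ → Quaternion ℝ) (k : ℤ) : MemLp (fk d k) 2 muP :=
  MemLp.of_bound (fk_continuous d k).aestronglyMeasurable ‖d k‖
    (Filter.Eventually.of_forall fun t => (fk_norm d k t).le)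

/-- the terms as elements of `L²` -/
def FK (d : ℤ → Quaternion ℝ) (k : ℤ) : Lp W2 2 muP := (fk_memLp d k).toLp

theorem FK_inner (d : ℤ → Quaternion ℝ) (k l : ℤ) :
    inner ℝ (FK d k) (FK d l) = if k = l then 2 * Real.pi * ‖d k‖ ^ 2 else 0 := by
  rw [L2.inner_def]
  have : (fun t => inner ℝ ((FK d k) t) ((FK d l) t)) =ᵐ[muP]
      fun t => Real.cos ((k - l : ℤ) * t) * inner ℝ (d k) (d l) := by
    filter_upwards [(fk_memLp d k).coeFn_toLp, (fk_memLp d l).coeFn_toLp] with t h1 h2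
    rw [← fk_inner]
    unfold FK
    rw [h1, h2]
  rw [integral_congr_ae this, integral_mul_const, ← interval_eq_muP, integral_cos_int]
  by_cases h : k = l
  · subst h; simp
  · rw [if_neg (by omega), if_neg h, zero_mul]

theorem FK_sum_norm (d : ℤ → Quaternion ℝ) (s : Finset ℤ) :
    ‖∑ k ∈ s, FK d k‖ ^ 2 = 2 * Real.pi * ∑ k ∈ s, ‖d k‖ ^ 2 := by
  rw [← real_inner_self_eq_norm_sq, sum_inner, Finset.mul_sum]
  refine Finset.sum_congr rfl fun k hk => ?_
  rw [inner_sum]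
  simp only [FK_inner]
  rw [Finset.sum_ite_eq]
  simp [hk]

theorem FK_summable {d : ℤ → Quaternion ℝ} (hd : Summable fun n => ‖d n‖ ^ 2) :
    Summable (FK d) := by
  rw [summable_iff_vanishing_norm]
  intro ε hε
  obtain ⟨s, hs⟩ := summable_iff_vanishing_norm.1 (hd.mul_left (2 * Real.pi)) (ε ^ 2) (by positivity)
  refine ⟨s, fun t ht => ?_⟩
  have h1 := hs t ht
  rw [← Finset.mul_sum, ← FK_sum_norm, Real.norm_of_nonneg (by positivity)] at h1
  exact lt_of_pow_lt_pow_left₀ 2 hε.le h1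

theorem l2_limit {d : ℤ → Quaternion ℝ} (hd : Summable fun n => ‖d n‖ ^ 2) :
    ∃ (A B : ℝ → Quaternion ℝ) (ns : ℕ → ℕ), StronglyMeasurable A ∧ StronglyMeasurable B ∧
      StrictMono ns ∧ ∀ᵐ t ∂muP,
        Filter.Tendsto (fun i => (ns i : ℝ)⁻¹ • ∑ m ∈ Finset.range (ns i),
          ∑ k ∈ Finset.Icc (-(m : ℤ)) m, Real.cos (k * t) • d k) Filter.atTop (nhds (A t)) ∧
        Filter.Tendsto (fun i => (ns i : ℝ)⁻¹ • ∑ m ∈ Finset.range (ns i),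
          ∑ k ∈ Finset.Icc (-(m : ℤ)) m, Real.sin (k * t) • d k) Filter.atTop (nhds (B t)) := by
  obtain ⟨Φ, hΦ⟩ := FK_summable hd
  have h1 : Filter.Tendsto (fun n : ℕ => ∑ k ∈ Finset.Icc (-(n : ℤ)) n, FK d k) Filter.atTop
      (nhds Φ) := hΦ.comp (Finset.tendsto_Icc_neg (R := ℤ))
  have h2 := h1.cesaro_smul
  obtain ⟨ns, hns, hae⟩ := (tendstoInMeasure_of_tendsto_Lp h2).exists_seq_tendsto_ae
  have hk : ∀ᵐ t ∂muP, ∀ k, FK d k t = fk d k t :=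
    ae_all_iff.2 fun k => (fk_memLp d k).coeFn_toLp
  have hs1 : ∀ᵐ t ∂muP, ∀ n : ℕ, (∑ k ∈ Finset.Icc (-(n : ℤ)) n, FK d k : Lp W2 2 muP) t
      = ∑ k ∈ Finset.Icc (-(n : ℤ)) n, FK d k t := by
    refine ae_all_iff.2 fun n => ?_
    filter_upwards [Lp.coeFn_finsetSum (Finset.Icc (-(n : ℤ)) n) (FK d)] with t ht
    rw [ht, Finset.sum_apply]
  have hs2 : ∀ᵐ t ∂muP, ∀ n : ℕ,
      ((n : ℝ)⁻¹ • ∑ m ∈ Finset.range n, ∑ k ∈ Finset.Icc (-(m : ℤ)) m, FK d k : Lp W2 2 muP) t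
      = (n : ℝ)⁻¹ • ∑ m ∈ Finset.range n,
        (∑ k ∈ Finset.Icc (-(m : ℤ)) m, FK d k : Lp W2 2 muP) t := by
    refine ae_all_iff.2 fun n => ?_
    filter_upwards [Lp.coeFn_finsetSum (Finset.range n)
      (fun m : ℕ => (∑ k ∈ Finset.Icc (-(m : ℤ)) m, FK d k : Lp W2 2 muP)),
      Lp.coeFn_smul ((n : ℝ)⁻¹)
      (∑ m ∈ Finset.range n, ∑ k ∈ Finset.Icc (-(m : ℤ)) m, FK d k : Lp W2 2 muP)] with t ht ht2
    rw [ht2, Pi.smul_apply, ht, Finset.sum_apply]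
  have c1 : Continuous fun w : W2 => w.fst := WithLp.prod_continuous_ofLp 2 _ _ |>.fst
  have c2 : Continuous fun w : W2 => w.snd := WithLp.prod_continuous_ofLp 2 _ _ |>.snd
  refine ⟨fun t => (Φ t).fst, fun t => (Φ t).snd, ns,
    c1.comp_stronglyMeasurable (Lp.stronglyMeasurable Φ),
    c2.comp_stronglyMeasurable (Lp.stronglyMeasurable Φ), hns, ?_⟩
  filter_upwards [hae, hk, hs1, hs2] with t ht hk hs1 hs2
  simp only [hs2, hs1, hk] at ht
  constructor
  · have := (c1.tendsto (Φ t)).comp ht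
    refine this.congr fun i => ?_
    let l : W2 →ₗ[ℝ] Quaternion ℝ := 
      { toFun := fun w => w.fst, map_add' := fun _ _ => rfl, map_smul' := fun _ _ => rfl }
    have hl : ∀ w : W2, w.fst = l w := fun _ => rfl
    simp only [Function.comp]
    rw [hl]
    rw [map_smul, map_sum]
    simp only [map_sum]
    rfl
  · have := (c2.tendsto (Φ t)).comp ht
    refine this.congr fun i => ?_
    let l : W2 →ₗ[ℝ] Quaternion ℝ := 
      { toFun := fun w => w.snd, map_add' := fun _ _ => rfl, map_smul' := fun _ _ => rfl }
    have hl : ∀ w : W2, w.snd = l w := fun _ => rfl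
    simp only [Function.comp]
    rw [hl]
    rw [map_smul, map_sum]
    simp only [map_sum]
    rfl


/-! ### The extremal function -/

/-- the slice function built from its even and odd parts on `(0, π)` -/
def psi (A B : ℝ → Quaternion ℝ) (q : Quaternion ℝ) : Quaternion ℝ :=
  A (Real.arccos q.re) + (‖q.im‖⁻¹ • q.im) * B (Real.arccos q.re)

theorem iu_norm {J : Quaternion ℝ} (hJ : J ^ 2 = -1) : ‖J‖ = 1 := by
  have h : ‖J‖ ^ 2 = 1 := by rw [← norm_pow, hJ, norm_neg, norm_one]
  nlinarith [norm_nonneg J]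

theorem psi_eval (A B : ℝ → Quaternion ℝ) {J : Quaternion ℝ} (hJ : J ^ 2 = -1) (x y : ℝ) :
    psi A B ((x : Quaternion ℝ) + y • J) = A (Real.arccos x)
      + (|y|⁻¹ * y) • (J * B (Real.arccos x)) := by
  obtain ⟨h0, -⟩ := iu_coords hJ
  have hre : ((x : Quaternion ℝ) + y • J).re = x := by simp [h0]
  have him : ((x : Quaternion ℝ) + y • J).im = y • J := by
    ext <;> simp [h0]
  rw [psi, hre, him, norm_smul, iu_norm hJ, mul_one, Real.norm_eq_abs, smul_smul, smul_mul_assoc]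

theorem psi_slice (A B : ℝ → Quaternion ℝ) : IsSlice (psi A B) := by
  intro x y I J hI hJ _
  have e : (x : Quaternion ℝ) - y • I = (x : Quaternion ℝ) + y • (-I) := by
    rw [smul_neg, sub_eq_add_neg]
  rw [e, psi_eval A B hJ, psi_eval A B hI, psi_eval A B (iu_neg hI), quat_div_two, quat_div_two]
  generalize |y|⁻¹ * y = s
  generalize A (Real.arccos x) = a
  generalize B (Real.arccos x) = b
  have e1 : J * I * (I * b) = -(J * b) := by
    rw [mul_assoc, ← mul_assoc I I b, iu_mul hI, neg_one_mul, mul_neg]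
  simp only [smul_mul_assoc, sub_mul, add_mul, mul_add, one_mul, mul_smul_comm, neg_mul, mul_neg,
    e1]
  module

theorem psi_measurable {A B : ℝ → Quaternion ℝ} (hA : StronglyMeasurable A)
    (hB : StronglyMeasurable B) : Measurable (psi A B) := by
  have h1 : Measurable fun q : Quaternion ℝ => Real.arccos q.re :=
    (Real.continuous_arccos.comp Quaternion.continuous_re).measurable
  have h2 : Measurable fun q : Quaternion ℝ => q.im := Quaternion.continuous_im.measurable
  exact (hA.measurable.comp h1).add ((h2.norm.inv.smul h2).mul (hB.measurable.comp h1))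

theorem fejer_expand (d : ℤ → Quaternion ℝ) (J : Quaternion ℝ) (t : ℝ) (N : ℕ) :
    fejer d J t N = (N : ℝ)⁻¹ • (∑ m ∈ Finset.range N,
          ∑ k ∈ Finset.Icc (-(m : ℤ)) m, Real.cos (k * t) • d k)
      + J * ((N : ℝ)⁻¹ • ∑ m ∈ Finset.range N,
          ∑ k ∈ Finset.Icc (-(m : ℤ)) m, Real.sin (k * t) • d k) := by
  rw [fejer, mul_smul_comm, ← smul_add, Finset.mul_sum, ← Finset.sum_add_distrib]
  congr 1
  refine Finset.sum_congr rfl fun m _ => ?_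
  rw [Finset.mul_sum, ← Finset.sum_add_distrib]
  refine Finset.sum_congr rfl fun k _ => ?_
  rw [eI, add_mul, Quaternion.coe_mul_eq_smul, smul_mul_assoc, mul_smul_comm]

theorem psi_limit {d : ℤ → Quaternion ℝ} {A B : ℝ → Quaternion ℝ} {ns : ℕ → ℕ}
    (h : ∀ᵐ t ∂muP,
        Filter.Tendsto (fun i => (ns i : ℝ)⁻¹ • ∑ m ∈ Finset.range (ns i),
          ∑ k ∈ Finset.Icc (-(m : ℤ)) m, Real.cos (k * t) • d k) Filter.atTop (nhds (A t)) ∧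
        Filter.Tendsto (fun i => (ns i : ℝ)⁻¹ • ∑ m ∈ Finset.range (ns i),
          ∑ k ∈ Finset.Icc (-(m : ℤ)) m, Real.sin (k * t) • d k) Filter.atTop (nhds (B t))) :
    ∀ᵐ t ∂muP, ∀ J : Quaternion ℝ, J ^ 2 = -1 →
      Filter.Tendsto (fun i => fejer d J t (ns i)) Filter.atTop (nhds (psi A B (eI J t))) := by
  have h' := reflect_mp.quasiMeasurePreserving.ae h
  have hm : ∀ᵐ t ∂muP, t ∈ Set.Ioc 0 (2 * Real.pi) := ae_restrict_mem measurableSet_Ioc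
  have hne : ∀ x : ℝ, ∀ᵐ t ∂muP, t ≠ x := fun x => ae_restrict_of_ae (Measure.ae_ne volume x)
  filter_upwards [h, h', hm, hne Real.pi, hne (2 * Real.pi)] with t ht ht' htm hn1 hn2 J hJ
  simp only [fejer_expand]
  rw [eI, psi_eval A B hJ]
  rcases lt_or_gt_of_ne hn1 with hlt | hgt
  · have hs : 0 < Real.sin t := Real.sin_pos_of_pos_of_lt_pi htm.1 hlt
    rw [Real.arccos_cos htm.1.le hlt.le, abs_of_pos hs, inv_mul_cancel₀ hs.ne', one_smul]
    exact ht.1.add (ht.2.const_mul J)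
  · have htl : t < 2 * Real.pi := lt_of_le_of_ne htm.2 hn2
    have hs : Real.sin t < 0 := by
      have := Real.sin_pos_of_pos_of_lt_pi (x := 2 * Real.pi - t) (by linarith) (by linarith)
      rw [Real.sin_two_pi_sub] at this
      linarith
    have hc : Real.cos t = Real.cos (2 * Real.pi - t) := (Real.cos_two_pi_sub t).symm
    rw [hc, Real.arccos_cos (by linarith) (by linarith), abs_of_neg hs,
      show (-Real.sin t)⁻¹ * Real.sin t = -1 by rw [inv_neg, neg_mul, inv_mul_cancel₀ hs.ne],
      neg_smul, one_smul, ← mul_neg]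
    have e1 : ∀ k : ℤ, Real.cos (k * (2 * Real.pi - t)) = Real.cos (k * t) := by
      intro k; rw [mul_sub, Real.cos_int_mul_two_pi_sub]
    have e2 : ∀ k : ℤ, Real.sin (k * (2 * Real.pi - t)) = -Real.sin (k * t) := by
      intro k; rw [mul_sub, Real.sin_int_mul_two_pi_sub]
    simp only [e1, e2, neg_smul, Finset.sum_neg_distrib, smul_neg] at ht'
    have h2 := ht'.2.neg
    simp only [neg_neg] at h2
    exact ht'.1.add (h2.const_mul J)

theorem eI_continuous (I : Quaternion ℝ) : Continuous (eI I) := by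
  unfold eI
  have := Quaternion.continuous_coe.comp Real.continuous_cos
  exact this.add (by fun_prop)

theorem cont_integrable {f : ℝ → Quaternion ℝ} (hf : Continuous f) : Integrable f muP :=
  (hf.integrableOn_Ioc : IntegrableOn f (Set.Ioc 0 (2 * Real.pi)) volume)

theorem eI_integral (I x : Quaternion ℝ) (j : ℤ) :
    ∫ t, eI I (j * t) * x ∂muP = if j = 0 then (2 * Real.pi) • x else 0 := by
  have e : ∀ t : ℝ, eI I (j * t) * x = Real.cos (j * t) • x + Real.sin (j * t) • (I * x) := by
    intro t; rw [eI, add_mul, Quaternion.coe_mul_eq_smul, smul_mul_assoc]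
  simp only [e]
  rw [integral_add (cont_integrable (by fun_prop)) (cont_integrable (by fun_prop)),
    integral_smul_const, integral_smul_const, ← interval_eq_muP, ← interval_eq_muP,
    integral_cos_int, integral_sin_int, zero_smul, add_zero]
  split_ifs <;> simp

theorem fejer_coef (d : ℤ → Quaternion ℝ) {I : Quaternion ℝ} (hI : I ^ 2 = -1) (n : ℤ) (N : ℕ) :
    ∫ t, eI I (-(n * t)) * fejer d I t N ∂muP = (N : ℝ)⁻¹ • ∑ m ∈ Finset.range N,
      if n ∈ Finset.Icc (-(m : ℤ)) m then (2 * Real.pi) • d n else 0 := by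
  have e : ∀ t : ℝ, eI I (-(n * t)) * fejer d I t N = (N : ℝ)⁻¹ • ∑ m ∈ Finset.range N,
      ∑ k ∈ Finset.Icc (-(m : ℤ)) m, eI I ((k - n : ℤ) * t) * d k := by
    intro t
    rw [fejer, mul_smul_comm, Finset.mul_sum]
    congr 1
    refine Finset.sum_congr rfl fun m _ => ?_
    rw [Finset.mul_sum]
    refine Finset.sum_congr rfl fun k _ => ?_
    rw [← mul_assoc, ← eI_add hI]
    congr 2
    push_cast
    ring
  have hi : ∀ k, Integrable (fun t : ℝ => eI I ((k - n : ℤ) * t) * d k) muP := fun k =>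
    cont_integrable (((eI_continuous I).comp (by fun_prop)).mul continuous_const)
  simp only [e]
  rw [integral_smul, integral_finsetSum _ fun m _ => integrable_finsetSum _ fun k _ => hi k]
  congr 1
  refine Finset.sum_congr rfl fun m _ => ?_
  rw [integral_finsetSum _ fun k _ => hi k]
  simp only [eI_integral, sub_eq_zero]
  rw [Finset.sum_ite_eq']

theorem psi_coef {C : ℝ} {d : ℤ → Quaternion ℝ} {A B : ℝ → Quaternion ℝ} {ns : ℕ → ℕ}
    (hns : StrictMono ns) {I : Quaternion ℝ} (hI : I ^ 2 = -1)
    (hb : ∀ t N, ‖fejer d I t N‖ ≤ C)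
    (hlim : ∀ᵐ t ∂muP,
      Filter.Tendsto (fun i => fejer d I t (ns i)) Filter.atTop (nhds (psi A B (eI I t)))) (n : ℤ) :
    fourierCoef (psi A B) I n = d n := by
  have hcont : ∀ N, Continuous fun t => fejer d I t N := by
    intro N
    unfold fejer
    have := eI_continuous I
    fun_prop
  have h1 : Filter.Tendsto (fun i => ∫ t, eI I (-(n * t)) * fejer d I t (ns i) ∂muP) Filter.atTop
      (nhds (∫ t, eI I (-(n * t)) * psi A B (eI I t) ∂muP)) := by
    refine tendsto_integral_of_dominated_convergence (fun _ => C) ?_ (integrable_const _) ?_ ?_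
    · intro i
      exact (((eI_continuous I).comp (by fun_prop)).mul (hcont _)).aestronglyMeasurable
    · intro i
      refine Filter.Eventually.of_forall fun t => ?_
      rw [norm_mul, eI_norm hI, one_mul]
      exact hb t _
    · filter_upwards [hlim] with t ht using ht.const_mul _
  simp only [fejer_coef d hI] at h1
  have h2 : Filter.Tendsto (fun m : ℕ => if n ∈ Finset.Icc (-(m : ℤ)) m
      then (2 * Real.pi) • d n else 0) Filter.atTop (nhds ((2 * Real.pi) • d n)) := by
    refine tendsto_const_nhds.congr' ?_
    filter_upwards [Filter.eventually_ge_atTop n.natAbs] with m hm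
    rw [if_pos (by rw [Finset.mem_Icc]; omega)]
  have h3 := h2.cesaro_smul.comp hns.tendsto_atTop
  have h4 := tendsto_nhds_unique h1 h3
  rw [fourierCoef, interval_eq_muP, h4, smul_smul, inv_mul_cancel₀ (by positivity), one_smul]

theorem psi_norm (σ : Measure IU) [IsProbabilityMeasure σ] {C : ℝ} (hC : 0 ≤ C)
    {ψ : Quaternion ℝ → Quaternion ℝ} (hm : Measurable ψ)
    (hb : ∀ᵐ t ∂muP, ∀ J : Quaternion ℝ, J ^ 2 = -1 → ‖ψ (eI J t)‖ ≤ C) :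
    eLpNorm ψ ⊤ (sphereMeasure σ) ≤ ENNReal.ofReal C := by
  have hs : MeasurableSet {q | ‖ψ q‖ ≤ C} := measurableSet_le hm.norm measurable_const
  have h1 : ∀ᵐ q ∂(sphereMeasure σ), ‖ψ q‖ ≤ C := by
    refine (sphere_ac' σ).ae_le ?_
    refine (ae_map_iff eI_measurable.aemeasurable hs).2 ?_
    refine (Measure.ae_prod_iff_ae_ae (eI_measurable hs)).2 ?_
    refine Filter.Eventually.of_forall fun J => ?_
    filter_upwards [hb] with t ht using ht J.1 J.2
  rw [eLpNorm_exponent_top]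
  refine eLpNormEssSup_le_of_ae_bound h1

theorem slice_zero : IsSlice (0 : Quaternion ℝ → Quaternion ℝ) := by
  intro x y I J _ _ _
  simp

theorem dir_two (σ : Measure IU) [IsProbabilityMeasure σ]
    (hinv : ∀ u : Quaternion ℝ, ‖u‖ = 1 →
      Measure.map (fun q => u⁻¹ * q * u) (sphereMeasure σ) = sphereMeasure σ)
    {φ : Quaternion ℝ → Quaternion ℝ} (hφ : IsSlice φ)
    (hφm : AEStronglyMeasurable φ (sphereMeasure σ))
    (hφtop : eLpNorm φ ⊤ (sphereMeasure σ) ≠ ⊤)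
    {c : ℤ → Quaternion ℝ}
    (hc : ∀ I : Quaternion ℝ, I ^ 2 = -1 → ∀ n : ℤ, fourierCoef φ I n = c n)
    {C : ℝ} (hC : 0 ≤ C) (hk : Hk C (fun j : ℕ => c (-((j : ℤ) + 1)))) :
    ∃ f : Quaternion ℝ → Quaternion ℝ, IsSlice f ∧
          AEStronglyMeasurable f (sphereMeasure σ) ∧ eLpNorm f ⊤ (sphereMeasure σ) ≠ ⊤ ∧
          (∀ I : Quaternion ℝ, I ^ 2 = -1 → ∀ n : ℤ, n < 0 → fourierCoef f I n = 0) ∧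
          (eLpNorm (φ - f) ⊤ (sphereMeasure σ)).toReal ≤ C := by
  obtain ⟨d, hd1, hd2⟩ := hk_extend hC hk
  obtain ⟨A, B, ns, hA, hB, hns, hlim⟩ := l2_limit (coef_summable hC hd2)
  have hpl := psi_limit hlim
  have hbd : ∀ J : Quaternion ℝ, J ^ 2 = -1 → ∀ t N, ‖fejer d J t N‖ ≤ C :=
    fun J hJ t N => fejer_bound hC hd2 hJ t N
  have hψs := psi_slice A B
  have hψm := psi_measurable hA hB
  have hψb : ∀ᵐ t ∂muP, ∀ J : Quaternion ℝ, J ^ 2 = -1 → ‖psi A B (eI J t)‖ ≤ C := by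
    filter_upwards [hpl] with t ht J hJ
    exact le_of_tendsto (ht J hJ).norm (Filter.Eventually.of_forall fun i => hbd J hJ t _)
  have hψn := psi_norm σ hC hψm hψb
  have hψa : AEStronglyMeasurable (psi A B) (sphereMeasure σ) := hψm.aestronglyMeasurable
  have hψtop : eLpNorm (psi A B) ⊤ (sphereMeasure σ) ≠ ⊤ :=
    ne_top_of_le_ne_top ENNReal.ofReal_ne_top hψn
  have i1 := slice_integrable σ hinv hφ hφm hφtop
  have i2 := slice_integrable σ hinv hψs hψa hψtop
  refine ⟨φ - psi A B, slice_sub hφ hψs, hφm.sub hψa,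
    ((MemLp.sub ⟨hφm, hφtop.lt_top⟩ ⟨hψa, hψtop.lt_top⟩ : MemLp (φ - psi A B) ⊤ _).2).ne, ?_, ?_⟩
  · intro I hI n hn
    rw [coef_sub hφ hψs i1 i2 hI, hc I hI, psi_coef hns hI (hbd I hI)
      (hpl.mono fun t ht => ht I hI) n]
    have := hd1 (-n - 1).toNat
    have e : -(((-n - 1).toNat : ℤ) + 1) = n := by omega
    rw [e] at this
    rw [this, sub_self]
  · rw [sub_sub_cancel]
    exact ENNReal.toReal_le_of_le_ofReal hC hψn


/-- Quaternionic Nehari theorem, sharp form: for `φ ∈ L^∞ₛ(∂𝔹)` the operator norm of the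
Hankel operator `H_φ : H²(∂𝔹) → H²₋(∂𝔹)`, `H_φ f = ℙ₋(φ ⋆ f)`, equals the `L^∞` distance
of `φ` from the bounded slice regular functions `H^∞(∂𝔹)`.  `H²(∂𝔹)` and `H²₋(∂𝔹)` are
identified with `ℓ²(ℕ, ℍ)` via coefficients, `H_φ` acting by `wₘ = Σ_{k ≥ 0} c(-(m+1)-k) aₖ`
where `c` are the Fourier coefficients of `φ`; the operator norm is the infimum of the bounds
`C`, and `H^∞(∂𝔹)` consists of the slice `L^∞` functions with vanishing negative Fourier
coefficients.  The measure `Σ` is assumed to have the natural symmetries of `dσ dt`. -/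
theorem hankel_norm_eq_distance (σ : Measure IU) [IsProbabilityMeasure σ]
    (hinv : ∀ u : Quaternion ℝ, ‖u‖ = 1 →
      Measure.map (fun q => u⁻¹ * q * u) (sphereMeasure σ) = sphereMeasure σ)
    (hconj : Measure.map (star : Quaternion ℝ → Quaternion ℝ) (sphereMeasure σ)
      = sphereMeasure σ)
    (φ : Quaternion ℝ → Quaternion ℝ) (hφ : IsSlice φ)
    (hφm : AEStronglyMeasurable φ (sphereMeasure σ))
    (hφtop : eLpNorm φ ⊤ (sphereMeasure σ) ≠ ⊤)
    (c : ℤ → Quaternion ℝ)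
    (hc : ∀ I : Quaternion ℝ, I ^ 2 = -1 → ∀ n : ℤ, fourierCoef φ I n = c n) :
    sInf {C : ℝ | 0 ≤ C ∧
        ∀ a : lp (fun _ : ℕ => Quaternion ℝ) 2,
          ∃ w : lp (fun _ : ℕ => Quaternion ℝ) 2,
            (∀ m : ℕ, HasSum (fun k : ℕ => c (-((m : ℤ) + 1) - (k : ℤ)) * a k) (w m)) ∧
            ‖w‖ ≤ C * ‖a‖}
      = sInf {d : ℝ | ∃ f : Quaternion ℝ → Quaternion ℝ, IsSlice f ∧
          AEStronglyMeasurable f (sphereMeasure σ) ∧ eLpNorm f ⊤ (sphereMeasure σ) ≠ ⊤ ∧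
          (∀ I : Quaternion ℝ, I ^ 2 = -1 → ∀ n : ℤ, n < 0 → fourierCoef f I n = 0) ∧
          d = (eLpNorm (φ - f) ⊤ (sphereMeasure σ)).toReal} := by
  have hHk : ∀ C : ℝ, (∀ a : lp (fun _ : ℕ => Quaternion ℝ) 2,
          ∃ w : lp (fun _ : ℕ => Quaternion ℝ) 2,
            (∀ m : ℕ, HasSum (fun k : ℕ => c (-((m : ℤ) + 1) - (k : ℤ)) * a k) (w m)) ∧
            ‖w‖ ≤ C * ‖a‖) ↔ Hk C (fun j : ℕ => c (-((j : ℤ) + 1))) := by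
    intro C
    have e : ∀ m k : ℕ, (-((m : ℤ) + 1) - (k : ℤ)) = -(((m + k : ℕ) : ℤ) + 1) := by
      intro m k; push_cast; ring
    simp only [Hk, e]
  simp only [hHk]
  have hz : ∀ I : Quaternion ℝ, I ^ 2 = -1 → ∀ n : ℤ, n < 0 →
      fourierCoef (0 : Quaternion ℝ → Quaternion ℝ) I n = 0 := by
    intro I _ n _
    simp [fourierCoef]
  apply le_antisymm
  · refine le_csInf ⟨_, 0, slice_zero, aestronglyMeasurable_zero, by simp, hz, rfl⟩ ?_
    rintro d ⟨f, h1, h2, h3, h4, rfl⟩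
    refine csInf_le ⟨0, fun C hC => hC.1⟩ ⟨ENNReal.toReal_nonneg, ?_⟩
    exact dir_one σ hinv hφ hφm hφtop hc h1 h2 h3 h4
  · refine le_csInf ⟨_, ENNReal.toReal_nonneg, dir_one σ hinv hφ hφm hφtop hc slice_zero
      aestronglyMeasurable_zero (by simp) hz⟩ ?_
    rintro C ⟨hC, hk⟩
    obtain ⟨f, h1, h2, h3, h4, h5⟩ := dir_two σ hinv hφ hφm hφtop hc hC hk
    refine le_trans (csInf_le ⟨0, ?_⟩ ⟨f, h1, h2, h3, h4, rfl⟩) h5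
    rintro d ⟨g, -, -, -, -, rfl⟩
    exact ENNReal.toReal_nonneg
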